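/- arXiv:2103.00618 — 5 statements merged into one kernel-verified Lean document; each statement's English description precedes it below -/
import Mathlib

section
/- Let U and U' be unicyclic graphs on the same vertex set with deg_U(v) = deg_{U'}(v) for every vertex v. Then there exists a finite sequence of graphs U = G_0, G_1, …, G_k = U' such that each G_{i+1} is obtained from G_i by a nontrivial 2-switch and every G_i is unicyclic. -/
/-!
A finite graph is unicyclic exactly when it is connected and has as many edges as vertices
(`Unicyclic.card`, `unicyclic_of_card`). Switches preserve degrees, hence the number of edges, so
it is enough to join `U` and `U'` by switches through connected graphs. This is proved in
`steps_of_conn` by induction on the number of edges, for graphs that are connected on a vertex set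
`S`, have no edges outside it, and have at most `|S|` edges.

* If some `l ∈ S` is a leaf, attached to `v` in `G` and to `t` in `G'` with `v ≠ t`, suppose
  `deg v ≤ deg t` (otherwise exchange the roles of `G` and `G'`). As `v` has the neighbour `l` that
  `t` lacks in `G`, some neighbour `w` of `t` is not a neighbour of `v`, and `w` can be chosen so
  that `v` and `t` remain joined without the edges `lv`, `tw` (`exists_trade`). Switching `lv`, `tw`
  to `lt`, `vw` keeps the graph connected (`exists_switch`). Now `l` hangs on `t` in both graphs
  and can be removed.
* If there is no leaf, counting edges shows that all degrees are two. No edge is a bridge then, by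
  parity (`reachable_of_even`), so the same switch makes the two graphs share an edge `xy`.
  Deleting it leaves trees on `S` with equal degrees, to which the induction hypothesis applies. In
  every intermediate tree `x` and `y` are leaves, hence not adjacent, so `xy` can be put back
  throughout (`steps_lift`).
-/

open SimpleGraph

variable {V : Type*}

/-- The 2-switch (a b / c d): delete the edges ab, cd and add the edges ac, bd. -/
def twoSwitch (G : SimpleGraph V) (a b c d : V) : SimpleGraph V :=
  (G.deleteEdges {s(a, b), s(c, d)}) ⊔ SimpleGraph.fromEdgeSet {s(a, c), s(b, d)}

/-- τ = (a b / c d) is a nontrivial 2-switch on `G`: the four vertices are distinct,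
`ab, cd ∈ E(G)` and `ac, bd ∉ E(G)`. -/
def IsNontrivialSwitch (G : SimpleGraph V) (a b c d : V) : Prop :=
  [a, b, c, d].Nodup ∧ G.Adj a b ∧ G.Adj c d ∧ ¬ G.Adj a c ∧ ¬ G.Adj b d

/-- A cycle subgraph: a subgraph isomorphic to a cycle graph, i.e. a subgraph that is
connected and 2-regular (every vertex of the subgraph has exactly two neighbours in it). -/
def IsCycleSubgraph (G : SimpleGraph V) (H : G.Subgraph) : Prop :=
  H.coe.Connected ∧ ∀ v ∈ H.verts, (H.neighborSet v).ncard = 2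

/-- A graph is unicyclic if it is connected and contains exactly one cycle subgraph. -/
def Unicyclic (G : SimpleGraph V) : Prop :=
  G.Connected ∧ ∃! H : G.Subgraph, IsCycleSubgraph G H

/-- `Cycles(G)`: the subgraph formed by all vertices and edges of `G` lying on some cycle. -/
def cyclesSub (G : SimpleGraph V) : G.Subgraph :=
  sSup {H | IsCycleSubgraph G H}

/-- `Forest(G) := G − E(Cycles(G))`. -/
def forestPart (G : SimpleGraph V) : SimpleGraph V :=
  G.deleteEdges (cyclesSub G).edgeSet

/-- A pseudoforest: every connected component contains at most one cycle subgraph, i.e. any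
two cycle subgraphs lying in the same connected component coincide. -/
def Pseudoforest (G : SimpleGraph V) : Prop :=
  ∀ H₁ H₂ : G.Subgraph, IsCycleSubgraph G H₁ → IsCycleSubgraph G H₂ →
    (∃ u ∈ H₁.verts, ∃ v ∈ H₂.verts, G.Reachable u v) → H₁ = H₂

/-- `cycles(G)`: the number of cycle subgraphs of `G`. -/
noncomputable def numCycles (G : SimpleGraph V) : ℕ :=
  {H : G.Subgraph | IsCycleSubgraph G H}.ncard

/-- `κ(G)`: the number of connected components of `G`. -/
noncomputable def numComponents (G : SimpleGraph V) : ℕ :=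
  Nat.card G.ConnectedComponent

/-- `G'` is obtained from `G` by a nontrivial 2-switch. -/
def SwitchStep (G G' : SimpleGraph V) : Prop :=
  ∃ a b c d : V, IsNontrivialSwitch G a b c d ∧ G' = twoSwitch G a b c d

/-- A cycle graph: a connected 2-regular graph. -/
def IsCycleGraph (G : SimpleGraph V) : Prop :=
  G.Connected ∧ ∀ v : V, (G.neighborSet v).ncard = 2

/-- `ℓ` is a leaf shared by `G` and `H`: it has degree one in both and its unique incident
edge is common to both graphs. -/
def SharedLeaf (G H : SimpleGraph V) : Prop :=
  ∃ ℓ v : V, (G.neighborSet ℓ).ncard = 1 ∧ (H.neighborSet ℓ).ncard = 1 ∧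
    G.Adj ℓ v ∧ H.Adj ℓ v

/-! ### Degrees and switches -/

/-- The degree of `v`, as the cardinality of its neighbour set (no decidability needed). -/
noncomputable def nd (G : SimpleGraph V) (v : V) : ℕ := (G.neighborSet v).ncard

lemma twoSwitch_adj (G : SimpleGraph V) (a b c d u v : V) :
    (twoSwitch G a b c d).Adj u v ↔
      (G.Adj u v ∧ s(u, v) ≠ s(a, b) ∧ s(u, v) ≠ s(c, d)) ∨
      ((s(u, v) = s(a, c) ∨ s(u, v) = s(b, d)) ∧ u ≠ v) := by
  simp [twoSwitch]

lemma SwitchStep.symm {G G' : SimpleGraph V} (h : SwitchStep G G') : SwitchStep G' G := by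
  obtain ⟨a, b, c, d, ⟨hn, h1, h2, h3, h4⟩, rfl⟩ := h
  simp only [List.nodup_cons, List.mem_cons, List.not_mem_nil, or_false, not_or] at hn
  refine ⟨a, c, b, d, ⟨?_, ?_, ?_, ?_, ?_⟩, ?_⟩
  · simp; grind
  · rw [twoSwitch_adj]; grind
  · rw [twoSwitch_adj]; grind
  · rw [twoSwitch_adj]; grind
  · rw [twoSwitch_adj]; grind
  · ext u v
    rw [twoSwitch_adj, twoSwitch_adj]
    have h1' := h1.symm
    have h2' := h2.symm
    have h3' : ¬ G.Adj c a := fun h => h3 h.symm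
    have h4' : ¬ G.Adj d b := fun h => h4 h.symm
    have := G.ne_of_adj (a := u) (b := v)
    simp only [Sym2.eq_iff, ne_eq]
    grind

lemma nd_switch {G G' : SimpleGraph V} (h : SwitchStep G G') [Finite V] (v : V) :
    nd G' v = nd G v := by
  obtain ⟨a, b, c, d, ⟨hn, h1, h2, h3, h4⟩, rfl⟩ := h
  simp only [List.nodup_cons, List.mem_cons, List.not_mem_nil, or_false, not_or] at hn
  have h1' := h1.symm
  have h2' := h2.symm
  have h3' : ¬ G.Adj c a := fun h => h3 h.symm
  have h4' : ¬ G.Adj d b := fun h => h4 h.symm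
  -- At each of the four switched vertices one neighbour is exchanged for a non-neighbour.
  have key : ∀ x y z : V, G.Adj x y → ¬ G.Adj x z →
      (twoSwitch G a b c d).neighborSet x = insert z (G.neighborSet x \ {y}) →
      nd (twoSwitch G a b c d) x = nd G x := by
    intro x y z hy hz he
    rw [nd, he, Set.ncard_exchange (by simpa using hz) (by simpa using hy), nd]
  by_cases ha : v = a
  · subst ha
    apply key _ b c h1 h3
    ext u
    simp only [mem_neighborSet, twoSwitch_adj, Set.mem_insert_iff, Set.mem_sdiff,
      Set.mem_singleton_iff, Sym2.eq_iff, ne_eq]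
    grind
  by_cases hb : v = b
  · subst hb
    apply key _ a d h1' h4
    ext u
    simp only [mem_neighborSet, twoSwitch_adj, Set.mem_insert_iff, Set.mem_sdiff,
      Set.mem_singleton_iff, Sym2.eq_iff, ne_eq]
    grind
  by_cases hc : v = c
  · subst hc
    apply key _ d a h2 h3'
    ext u
    simp only [mem_neighborSet, twoSwitch_adj, Set.mem_insert_iff, Set.mem_sdiff,
      Set.mem_singleton_iff, Sym2.eq_iff, ne_eq]
    grind
  by_cases hd : v = d
  · subst hd
    apply key _ c b h2' h4'
    ext u
    simp only [mem_neighborSet, twoSwitch_adj, Set.mem_insert_iff, Set.mem_sdiff,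
      Set.mem_singleton_iff, Sym2.eq_iff, ne_eq]
    grind
  · have : (twoSwitch G a b c d).neighborSet v = G.neighborSet v := by
      ext u
      simp only [mem_neighborSet, twoSwitch_adj, Sym2.eq_iff, ne_eq]
      grind
    rw [nd, this, nd]

lemma sum_nd [Fintype V] (G : SimpleGraph V) : ∑ v, nd G v = 2 * G.edgeSet.ncard := by
  classical
  have h1 : ∀ v, nd G v = G.degree v := fun v => by
    rw [nd, Set.ncard_eq_toFinset_card', ← card_neighborFinset_eq_degree, neighborFinset]
  simp_rw [h1, sum_degrees_eq_twice_card_edges]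
  rw [Set.ncard_eq_toFinset_card', edgeFinset]

lemma edges_eq_of_nd [Fintype V] {G G' : SimpleGraph V} (h : ∀ v, nd G v = nd G' v) :
    G.edgeSet.ncard = G'.edgeSet.ncard := by
  have h1 := sum_nd G
  have h2 := sum_nd G'
  simp_rw [h] at h1
  omega

lemma nd_delete [Finite V] {G : SimpleGraph V} {x y : V} (h : G.Adj x y) (v : V) [DecidableEq V] :
    nd (G.deleteEdges {s(x, y)}) v = nd G v - if v = x ∨ v = y then 1 else 0 := by
  have h' := h.symm
  have hne := h.ne
  by_cases hx : v = x
  · subst hx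
    have : (G.deleteEdges {s(v, y)}).neighborSet v = G.neighborSet v \ {y} := by
      ext u; simp; grind
    rw [nd, this, Set.ncard_sdiff_singleton_of_mem (by simpa using h), nd]; simp
  by_cases hy : v = y
  · subst hy
    have : (G.deleteEdges {s(x, v)}).neighborSet v = G.neighborSet v \ {x} := by
      ext u; simp; grind
    rw [nd, this, Set.ncard_sdiff_singleton_of_mem (by simpa using h'), nd]; simp
  · have : (G.deleteEdges {s(x, y)}).neighborSet v = G.neighborSet v := by
      ext u; simp; grind
    rw [nd, this, nd]; simp [hx, hy]

lemma edges_delete [Finite V] {G : SimpleGraph V} {x y : V} (h : G.Adj x y) :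
    (G.deleteEdges {s(x, y)}).edgeSet.ncard + 1 = G.edgeSet.ncard := by
  rw [edgeSet_deleteEdges, Set.ncard_sdiff_singleton_add_one (by simpa using h)]

lemma delete_sup_edge {G : SimpleGraph V} {x y : V} (h : G.Adj x y) :
    G.deleteEdges {s(x, y)} ⊔ edge x y = G := by
  ext u v
  have := h.symm
  have := G.ne_of_adj (a := u) (b := v)
  simp [edge_adj]
  grind

lemma eq_of_nd_one {G : SimpleGraph V} {x y z : V} (h : nd G x = 1) (hy : G.Adj x y)
    (hz : G.Adj x z) : z = y := by
  obtain ⟨w, hw⟩ := Set.ncard_eq_one.mp h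
  have h1 : y ∈ G.neighborSet x := hy
  have h2 : z ∈ G.neighborSet x := hz
  rw [hw] at h1 h2
  simp_all

/-- A set of vertices closed under adjacency is closed under reachability. -/
lemma reachable_closed {G : SimpleGraph V} {C : Set V} (hC : ∀ a b, a ∈ C → G.Adj a b → b ∈ C)
    {a b : V} (h : G.Reachable a b) (ha : a ∈ C) : b ∈ C := by
  obtain ⟨p⟩ := h
  induction p with
  | nil => exact ha
  | cons h _ ih => exact ih (hC _ _ ha h)

/-- If the endpoints of every edge of `G` are joined in `H`, then reachability in `G` implies
reachability in `H`. -/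
lemma reachable_transfer {G H : SimpleGraph V} (hC : ∀ a b, G.Adj a b → H.Reachable a b)
    {a b : V} (h : G.Reachable a b) : H.Reachable a b := by
  obtain ⟨p⟩ := h
  induction p with
  | nil => exact Reachable.refl _
  | cons h _ ih => exact (hC _ _ h).trans ih

/-- In a graph with all degrees even no edge is a bridge: otherwise, after deleting the edge `xy`,
the component of `x` would contain `x` as its only vertex of odd degree. -/
lemma reachable_of_even [Finite V] {K : SimpleGraph V} (he : ∀ v, Even (nd K v)) {x y : V}
    (h : K.Adj x y) : (K.deleteEdges {s(x, y)}).Reachable x y := by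
  classical
  have := Fintype.ofFinite V
  set T := K.deleteEdges {s(x, y)} with hT
  let C : SimpleGraph V :=
    { Adj := fun a b => T.Adj a b ∧ T.Reachable x a
      symm := ⟨fun a b hab => ⟨hab.1.symm, hab.2.trans hab.1.reachable⟩⟩
      loopless := ⟨fun a ha => T.loopless.irrefl a ha.1⟩ }
  have hdeg : ∀ v, C.degree v = if T.Reachable x v then nd T v else 0 := by
    intro v
    have : C.degree v = nd C v := by
      rw [nd, Set.ncard_eq_toFinset_card', ← card_neighborFinset_eq_degree, neighborFinset]
    rw [this]
    split_ifs with hv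
    · have : C.neighborSet v = T.neighborSet v := by
        ext u; simp [C, hv]
      rw [nd, this, nd]
    · have : C.neighborSet v = ∅ := by
        ext u; simp [C, hv]
      rw [nd, this, Set.ncard_empty]
  have hpos : ∀ v u, K.Adj v u → 0 < nd K v := fun v u hvu =>
    (Set.ncard_pos).mpr ⟨u, hvu⟩
  have hx : Odd (C.degree x) := by
    rw [hdeg, if_pos (Reachable.refl _), hT, nd_delete h]
    have := he x
    have := hpos _ _ h
    simp; grind
  obtain ⟨w, hw, hodd⟩ := C.exists_ne_odd_degree_of_exists_odd_degree x hx
  rw [hdeg] at hodd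
  split_ifs at hodd with hr
  · by_cases hwy : w = y
    · rwa [← hwy]
    · rw [hT, nd_delete h, if_neg (by tauto)] at hodd
      have := he w
      grind
  · simp at hodd

/-! ### Unicyclic graphs are the connected graphs with as many edges as vertices -/

/-- An edge of a cycle subgraph is not a bridge, by parity of the degrees of the subgraph. -/
lemma IsCycleSubgraph.reachable [Finite V] {G : SimpleGraph V} {H : G.Subgraph}
    (hH : IsCycleSubgraph G H) {x y : V} (h : H.Adj x y) :
    (G.deleteEdges {s(x, y)}).Reachable x y := by
  have he : ∀ v, Even (nd H.spanningCoe v) := by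
    intro v
    have h1 : H.spanningCoe.neighborSet v = H.neighborSet v := by ext u; simp
    rw [nd, h1]
    by_cases hv : v ∈ H.verts
    · rw [hH.2 v hv]; exact even_two
    · have : H.neighborSet v = ∅ := by
        ext u
        simp only [Subgraph.mem_neighborSet, Set.mem_empty_iff_false, iff_false]
        exact fun hu => hv hu.fst_mem
      rw [this]; simp
  refine (reachable_of_even he (x := x) (y := y) (by simpa using h)).mono ?_
  intro a b hab
  simp only [deleteEdges_adj, Subgraph.spanningCoe_adj] at hab ⊢
  exact ⟨hab.1.adj_sub, hab.2⟩

lemma IsCycleSubgraph.exists_adj {G : SimpleGraph V} {H : G.Subgraph}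
    (hH : IsCycleSubgraph G H) : ∃ x y, H.Adj x y := by
  obtain ⟨⟨x, hx⟩⟩ := hH.1.nonempty
  have h2 := hH.2 x hx
  obtain ⟨y, hy⟩ : (H.neighborSet x).Nonempty := Set.nonempty_of_ncard_ne_zero (by omega)
  exact ⟨x, y, hy⟩

lemma exists_cycleSubgraph {G : SimpleGraph V} (h : ¬ G.IsAcyclic) :
    ∃ H, IsCycleSubgraph G H := by
  simp only [IsAcyclic, not_forall, not_not] at h
  obtain ⟨v, c, hc⟩ := h
  refine ⟨c.toSubgraph, c.toSubgraph_connected.coe, fun w hw => ?_⟩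
  exact hc.ncard_neighborSet_toSubgraph_eq_two (by simpa using hw)

/-- A cycle subgraph of `G` regarded in another graph containing its edges. -/
lemma IsCycleSubgraph.transfer {G G' : SimpleGraph V} {H : G.Subgraph}
    (hH : IsCycleSubgraph G H) (hle : ∀ x y, H.Adj x y → G'.Adj x y) :
    ∃ H' : G'.Subgraph, IsCycleSubgraph G' H' ∧ ∀ x y, H'.Adj x y ↔ H.Adj x y :=
  ⟨{ verts := H.verts
     Adj := H.Adj
     adj_sub := fun h => hle _ _ h
     edge_vert := fun h => H.edge_vert h
     symm := H.symm }, hH, fun _ _ => Iff.rfl⟩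

lemma connected_delete {G : SimpleGraph V} (hG : G.Connected) {x y : V}
    (h : (G.deleteEdges {s(x, y)}).Reachable x y) : (G.deleteEdges {s(x, y)}).Connected :=
  hG.connected_delete_edge_of_not_isBridge (by rw [isBridge_iff]; exact not_not.mpr h)

/-- A cycle subgraph contained in another one equals it: both are 2-regular and the larger one
is connected. -/
lemma IsCycleSubgraph.eq_of_adj [Finite V] {G : SimpleGraph V} {H K : G.Subgraph}
    (hH : IsCycleSubgraph G H) (hK : IsCycleSubgraph G K)
    (hle : ∀ x y, H.Adj x y → K.Adj x y) : H = K := by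
  have hv : ∀ v ∈ H.verts, v ∈ K.verts := by
    intro v hv
    obtain ⟨y, hy⟩ : (H.neighborSet v).Nonempty :=
      Set.nonempty_of_ncard_ne_zero (by rw [hH.2 v hv]; omega)
    exact (hle _ _ hy).fst_mem
  have hN : ∀ v ∈ H.verts, H.neighborSet v = K.neighborSet v := by
    intro v hvH
    have hsub : H.neighborSet v ⊆ K.neighborSet v := fun u hu => hle _ _ hu
    apply Set.eq_of_subset_of_ncard_le hsub
    rw [hH.2 v hvH, hK.2 v (hv v hvH)]
  have hadj : ∀ v ∈ H.verts, ∀ u, K.Adj v u → H.Adj v u := by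
    intro v hvH u hu
    have : u ∈ K.neighborSet v := hu
    rw [← hN v hvH] at this
    exact this
  obtain ⟨⟨x, hx⟩⟩ := hH.1.nonempty
  have hall : ∀ v ∈ K.verts, v ∈ H.verts := by
    intro v hvK
    have hr := hK.1.preconnected ⟨x, hv x hx⟩ ⟨v, hvK⟩
    exact reachable_closed (C := {u : K.verts | (u : V) ∈ H.verts})
      (fun a b ha hab => (hadj a ha b hab).snd_mem) hr hx
  apply Subgraph.ext
  · exact Set.Subset.antisymm hv hall
  · ext a b
    exact ⟨hle a b, fun h => hadj a (hall a h.fst_mem) b h⟩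

lemma Unicyclic.card [Finite V] {G : SimpleGraph V} (h : Unicyclic G) :
    G.edgeSet.ncard = Nat.card V := by
  obtain ⟨hc, H, hH, huniq⟩ := h
  obtain ⟨x, y, hxy⟩ := hH.exists_adj
  have hconn := connected_delete hc (hH.reachable hxy)
  have hac : (G.deleteEdges {s(x, y)}).IsAcyclic := by
    by_contra hac
    obtain ⟨K, hK⟩ := exists_cycleSubgraph hac
    obtain ⟨K', hK', hKK⟩ := hK.transfer (G' := G) (fun a b hab => (deleteEdges_le _) hab.adj_sub)
    have hxy' := hxy
    rw [← huniq K' hK', hKK] at hxy'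
    simpa using hxy'.adj_sub
  have := (isTree_iff_connected_and_card.mp ⟨hconn, hac⟩).2
  have h1 := edges_delete hxy.adj_sub
  rw [Nat.card_coe_set_eq] at this
  omega

lemma unicyclic_of_card [Finite V] {G : SimpleGraph V} (hc : G.Connected)
    (hcard : G.edgeSet.ncard = Nat.card V) : Unicyclic G := by
  have hac : ¬ G.IsAcyclic := by
    intro hac
    have := (isTree_iff_connected_and_card.mp ⟨hc, hac⟩).2
    rw [Nat.card_coe_set_eq] at this
    omega
  obtain ⟨H, hH⟩ := exists_cycleSubgraph hac
  refine ⟨hc, H, hH, fun K hK => ?_⟩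
  refine hK.eq_of_adj hH fun x y hxy => ?_
  by_contra hnot
  -- Deleting the edge `xy` of `K` leaves a tree, which still contains `H`.
  have hconn := connected_delete hc (hK.reachable hxy)
  have h1 := edges_delete hxy.adj_sub
  have htree : (G.deleteEdges {s(x, y)}).IsTree :=
    isTree_iff_connected_and_card.mpr ⟨hconn, by rw [Nat.card_coe_set_eq]; omega⟩
  obtain ⟨H', hH', hHH⟩ := hH.transfer (G' := G.deleteEdges {s(x, y)}) (by
    intro a b hab
    have := hab.symm
    simp only [deleteEdges_adj, Set.mem_singleton_iff, Sym2.eq_iff]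
    refine ⟨hab.adj_sub, ?_⟩
    rintro (⟨rfl, rfl⟩ | ⟨rfl, rfl⟩)
    · exact hnot hab
    · exact hnot this)
  obtain ⟨a, b, hab⟩ := hH'.exists_adj
  exact isBridge_iff.mp (isAcyclic_iff_forall_adj_isBridge.mp htree.2 hab.adj_sub)
    (hH'.reachable hab)

/-! ### Switches between graphs that are connected on a set of vertices -/

/-- `G` is connected on the nonempty vertex set `S`, and every vertex outside `S` is isolated. -/
structure Conn (S : Set V) (G : SimpleGraph V) : Prop where
  nonempty : S.Nonempty
  mem : ∀ a b, G.Adj a b → a ∈ S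
  reach : ∀ a ∈ S, ∀ b ∈ S, G.Reachable a b

/-- A 2-switch between two graphs that are connected on `S`. -/
def Step (S : Set V) (X Y : SimpleGraph V) : Prop :=
  SwitchStep X Y ∧ Conn S X ∧ Conn S Y

lemma Step.symm {S : Set V} {X Y : SimpleGraph V} (h : Step S X Y) : Step S Y X :=
  ⟨h.1.symm, h.2.2, h.2.1⟩

lemma steps_symm {S : Set V} {X Y : SimpleGraph V} (h : Relation.ReflTransGen (Step S) X Y) :
    Relation.ReflTransGen (Step S) Y X :=
  have : Std.Symm (Step S) := ⟨fun _ _ h => h.symm⟩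
  Relation.ReflTransGen.stdSymm.symm _ _ h

lemma steps_nd [Finite V] {S : Set V} {X Y : SimpleGraph V}
    (h : Relation.ReflTransGen (Step S) X Y) (v : V) : nd Y v = nd X v := by
  induction h with
  | refl => rfl
  | tail _ h ih => rw [nd_switch h.1, ih]

/-- The last edge `pt` of a path from `v` to `t`: the rest of the path avoids `t`. -/
lemma exists_last_step {T : SimpleGraph V} {v t : V} (h : T.Reachable v t) (hne : v ≠ t) :
    ∃ p, T.Adj p t ∧ (T.deleteIncidenceSet t).Reachable v p := by
  obtain ⟨q⟩ := h
  induction q with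
  | nil => exact absurd rfl hne
  | @cons a b c hab q ih =>
    by_cases hb : b = c
    · subst hb
      exact ⟨a, hab, Reachable.refl _⟩
    · obtain ⟨p, hp, hr⟩ := ih hb
      refine ⟨p, hp, Reachable.trans (Adj.reachable ?_) hr⟩
      rw [deleteIncidenceSet_adj]
      exact ⟨hab, hne, hb⟩

/-- The choice of the edge `tw` traded for `lv`: since `v` has degree at most that of `t` and also
has the neighbour `l` that `t` lacks, some neighbour `w` of `t` is not a neighbour of `v`; it can
be taken such that `v` and `t` stay joined without the edges `lv` and `tw`. -/
lemma exists_trade [Finite V] {G : SimpleGraph V} {l v t : V} (hlv : G.Adj l v)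
    (hn : ¬ G.Adj l t) (htl : t ≠ l)
    (hT : (G.deleteEdges {s(l, v)}).Reachable v t)
    (hd : nd G v ≤ nd G t) (h2 : 2 ≤ nd G t) :
    ∃ w, G.Adj t w ∧ w ≠ v ∧ ¬ G.Adj v w ∧
      ((G.deleteEdges {s(l, v)}).deleteEdges {s(t, w)}).Reachable v t := by
  have hvt : v ≠ t := by rintro rfl; exact hn hlv
  have hlN : l ∈ G.neighborSet v := hlv.symm
  have hc1 : (G.neighborSet v \ {l}).ncard + 1 = nd G v := Set.ncard_sdiff_singleton_add_one hlN
  by_cases hadj : G.Adj v t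
  · -- `v` and `t` are adjacent: the edge `vt` joins them.
    have hw : ∃ w, G.Adj t w ∧ w ≠ v ∧ ¬ G.Adj v w := by
      by_contra! hcon
      have hsub : G.neighborSet t ⊆ insert v ((G.neighborSet v \ {l}) \ {t}) := by
        intro w hw
        by_cases hwv : w = v
        · simp [hwv]
        · refine Or.inr ⟨⟨hcon w hw hwv, ?_⟩, ?_⟩
          · rintro rfl; exact hn (G.adj_symm hw)
          · rintro rfl; exact G.loopless.irrefl _ hw
      have h3 := Set.ncard_le_ncard hsub
      have h4 := Set.ncard_insert_le v ((G.neighborSet v \ {l}) \ {t})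
      have h5 : ((G.neighborSet v \ {l}) \ {t}).ncard + 1 = (G.neighborSet v \ {l}).ncard :=
        Set.ncard_sdiff_singleton_add_one ⟨hadj, htl⟩
      unfold nd at *
      omega
    obtain ⟨w, hw1, hw2, hw3⟩ := hw
    refine ⟨w, hw1, hw2, hw3, Adj.reachable ?_⟩
    simp only [deleteEdges_adj, Set.mem_singleton_iff, Sym2.eq_iff]
    grind
  by_cases hcom : ∃ p, G.Adj v p ∧ G.Adj t p
  · -- A common neighbour `p` joins them.
    obtain ⟨p, hvp, htp⟩ := hcom
    have hw : ∃ w, G.Adj t w ∧ ¬ G.Adj v w := by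
      by_contra! hcon
      have hsub : G.neighborSet t ⊆ G.neighborSet v \ {l} := by
        intro w hw
        refine ⟨hcon w hw, ?_⟩
        rintro rfl; exact hn (G.adj_symm hw)
      have h3 := Set.ncard_le_ncard hsub
      unfold nd at *
      omega
    obtain ⟨w, hw1, hw3⟩ := hw
    have hpl : p ≠ l := by rintro rfl; exact hn htp.symm
    have hwv : w ≠ v := by rintro rfl; exact hadj hw1.symm
    refine ⟨w, hw1, hwv, hw3,
      (Adj.reachable (v := p) ?_).trans (Adj.reachable ?_)⟩
    · simp only [deleteEdges_adj, Set.mem_singleton_iff, Sym2.eq_iff]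
      have := hvp.ne
      grind
    · simp only [deleteEdges_adj, Set.mem_singleton_iff, Sym2.eq_iff]
      refine ⟨⟨htp.symm, ?_⟩, ?_⟩
      · grind
      · have := htp.ne
        grind
  · -- No neighbour of `t` is a neighbour of `v`, so any one off the path to `t` will do.
    obtain ⟨p, hp, hr⟩ := exists_last_step hT hvt
    obtain ⟨w, hw, hwp⟩ := Set.exists_ne_of_one_lt_ncard (s := G.neighborSet t) (by
      unfold nd at h2; omega) p
    refine ⟨w, hw, ?_, fun h => hcom ⟨w, h, hw⟩, ?_⟩
    · rintro rfl; exact hadj (G.adj_symm hw)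
    · refine (hr.mono ?_).trans (Adj.reachable ?_)
      · intro a b hab
        rw [deleteIncidenceSet_adj] at hab
        rw [deleteEdges_adj]
        refine ⟨hab.1, ?_⟩
        simp only [Set.mem_singleton_iff, Sym2.eq_iff]
        grind
      · rw [deleteEdges_adj]
        refine ⟨hp, ?_⟩
        have := hp.ne
        simp only [Set.mem_singleton_iff, Sym2.eq_iff]
        grind

/-- If `lv` is an edge without which `v` still reaches every vertex of `S` except possibly `l`
(for instance `l` is a leaf, or `lv` is not a bridge), then one switch replaces `lv` by `lt`,
keeping the graph connected on `S`. -/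
lemma exists_switch [Finite V] {S : Set V} {G : SimpleGraph V} (hG : Conn S G) {l v t : V}
    (hlv : G.Adj l v) (htS : t ∈ S) (htl : t ≠ l) (hn : ¬ G.Adj l t)
    (hT : ∀ u ∈ S, u ≠ l → (G.deleteEdges {s(l, v)}).Reachable v u)
    (hd : nd G v ≤ nd G t) (h2 : 2 ≤ nd G t) :
    ∃ G₁, Step S G G₁ ∧ G₁.Adj l t := by
  obtain ⟨w, hw, hwv, hvw, hr⟩ := exists_trade hlv hn htl (hT t htS htl) hd h2
  have hvt : v ≠ t := by rintro rfl; exact hn hlv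
  have hlw : l ≠ w := by rintro rfl; exact hn hw.symm
  have hlv' := hlv.ne
  have htw := hw.ne
  have h1 : (twoSwitch G l v t w).Adj l t := by
    rw [twoSwitch_adj]; exact Or.inr ⟨Or.inl rfl, htl.symm⟩
  have h3 : (twoSwitch G l v t w).Adj v w := by
    rw [twoSwitch_adj]; exact Or.inr ⟨Or.inr rfl, hwv.symm⟩
  have hvt' : (twoSwitch G l v t w).Reachable v t := by
    refine hr.mono fun a b hab => ?_
    simp only [deleteEdges_adj, Set.mem_singleton_iff] at hab
    rw [twoSwitch_adj]
    exact Or.inl ⟨hab.1.1, hab.1.2, hab.2⟩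
  have hreach : ∀ u ∈ S, (twoSwitch G l v t w).Reachable v u := by
    intro u hu
    by_cases hul : u = l
    · subst hul
      exact hvt'.trans h1.symm.reachable
    · refine reachable_transfer ?_ (hT u hu hul)
      intro a b hab
      simp only [deleteEdges_adj, Set.mem_singleton_iff] at hab
      by_cases hE : s(a, b) = s(t, w)
      · rw [Sym2.eq_iff] at hE
        obtain ⟨rfl, rfl⟩ | ⟨rfl, rfl⟩ := hE
        · exact hvt'.symm.trans h3.reachable
        · exact h3.symm.reachable.trans hvt'
      · apply Adj.reachable
        rw [twoSwitch_adj]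
        exact Or.inl ⟨hab.1, hab.2, hE⟩
  refine ⟨twoSwitch G l v t w, ⟨⟨l, v, t, w, ⟨?_, hlv, hw, hn, hvw⟩, rfl⟩, hG, ?_⟩, h1⟩
  · simp; grind
  · refine ⟨hG.nonempty, ?_, fun a ha b hb => (hreach a ha).symm.trans (hreach b hb)⟩
    intro a b hab
    have m1 := hG.mem _ _ hlv
    have m2 := hG.mem _ _ hlv.symm
    have m3 := hG.mem _ _ hw.symm
    have m4 := hG.mem a b
    rw [twoSwitch_adj] at hab
    simp only [Sym2.eq_iff] at hab
    grind

/-- A 2-switch remains one when the same new edge `xy` is added to both graphs. -/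
lemma switchStep_sup_edge {X Y : SimpleGraph V} {x y : V} (h : SwitchStep X Y)
    (hX : ¬ X.Adj x y) (hY : ¬ Y.Adj x y) : SwitchStep (X ⊔ edge x y) (Y ⊔ edge x y) := by
  obtain ⟨a, b, c, d, ⟨hn, h1, h2, h3, h4⟩, rfl⟩ := h
  have hX' : ¬ X.Adj y x := fun h => hX h.symm
  have hn' := hn
  simp only [List.nodup_cons, List.mem_cons, List.not_mem_nil, or_false, not_or] at hn'
  rw [twoSwitch_adj] at hY
  simp only [Sym2.eq_iff] at hY
  have h1' := h1.symm
  have h2' := h2.symm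
  refine ⟨a, b, c, d, ⟨hn, Or.inl h1, Or.inl h2, ?_, ?_⟩, ?_⟩
  · rw [sup_adj, edge_adj]; grind
  · rw [sup_adj, edge_adj]; grind
  · ext u v
    rw [sup_adj, twoSwitch_adj, twoSwitch_adj, sup_adj, edge_adj]
    simp only [Sym2.eq_iff]
    grind

/-- A sequence of switches can be carried out with an extra edge `xy` present, provided that no
graph of the sequence contains this edge. -/
lemma steps_lift [Finite V] {S₀ S : Set V} {H H' : SimpleGraph V} {x y : V}
    (hadd : ∀ X, Conn S₀ X → (∀ v, nd X v = nd H v) → ¬ X.Adj x y ∧ Conn S (X ⊔ edge x y))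
    (h : Relation.ReflTransGen (Step S₀) H H') :
    Relation.ReflTransGen (Step S) (H ⊔ edge x y) (H' ⊔ edge x y) := by
  induction h with
  | refl => exact .refl
  | tail h1 h2 ih =>
    have a1 := hadd _ h2.2.1 (steps_nd h1)
    have a2 := hadd _ h2.2.2 (steps_nd (h1.tail h2))
    exact ih.tail ⟨switchStep_sup_edge h2.1 a1.1 a2.1, a1.2, a2.2⟩

/-! ### Removing and restoring a shared edge -/

lemma Conn.exists_adj {S : Set V} {G : SimpleGraph V} (hG : Conn S G) {a b : V} (ha : a ∈ S)
    (hb : b ∈ S) (hab : a ≠ b) : ∃ c, G.Adj a c := by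
  by_contra! h
  exact hab (reachable_closed (C := {a}) (by rintro x y rfl hxy; exact absurd hxy (h y))
    (hG.reach a ha b hb) rfl).symm

/-- Two adjacent leaves exhaust `S`. -/
lemma Conn.eq_or_eq {S : Set V} {G : SimpleGraph V} (hG : Conn S G) {x y z : V} (h : G.Adj x y)
    (hx : nd G x = 1) (hy : nd G y = 1) (hz : z ∈ S) : z = x ∨ z = y := by
  refine reachable_closed (C := {u | u = x ∨ u = y}) ?_ (hG.reach x (hG.mem _ _ h) z hz)
    (Or.inl rfl)
  rintro a b (rfl | rfl) hab
  · exact Or.inr (eq_of_nd_one hx h hab)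
  · exact Or.inl (eq_of_nd_one hy h.symm hab)

lemma Conn.leaf_reach {S : Set V} {G : SimpleGraph V} (hG : Conn S G) {l t : V} (h : G.Adj l t)
    (hl : nd G l = 1) (u : V) (hu : u ∈ S) (hul : u ≠ l) :
    (G.deleteEdges {s(l, t)}).Reachable t u := by
  have key : ∀ a, G.Walk a u → (a = l → (G.deleteEdges {s(l, t)}).Reachable t u) ∧
      (a ≠ l → (G.deleteEdges {s(l, t)}).Reachable a u) := by
    intro a p
    induction p with
    | nil => exact ⟨fun h => absurd h hul, fun _ => Reachable.refl _⟩
    | @cons a b c hab p ih =>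
      obtain ⟨ih1, ih2⟩ := ih hu hul
      constructor
      · rintro rfl
        obtain rfl := eq_of_nd_one hl h hab
        exact ih2 hab.ne'
      · intro hal
        by_cases hbl : b = l
        · subst hbl
          obtain rfl := eq_of_nd_one hl h hab.symm
          exact ih1 rfl
        · refine Reachable.trans (Adj.reachable ?_) (ih2 hbl)
          simp only [deleteEdges_adj, Set.mem_singleton_iff, Sym2.eq_iff]
          grind
  obtain ⟨p⟩ := hG.reach t (hG.mem _ _ h.symm) u hu
  exact (key t p).2 h.ne'

lemma Conn.delete_leaf {S : Set V} {G : SimpleGraph V} (hG : Conn S G) {l t : V} (h : G.Adj l t)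
    (hl : nd G l = 1) : Conn (S \ {l}) (G.deleteEdges {s(l, t)}) := by
  have hr := hG.leaf_reach h hl
  refine ⟨⟨t, hG.mem _ _ h.symm, h.ne'⟩, ?_, fun a ha b hb =>
    (hr a ha.1 ha.2).symm.trans (hr b hb.1 hb.2)⟩
  intro a b hab
  simp only [deleteEdges_adj, Set.mem_singleton_iff] at hab
  refine ⟨hG.mem _ _ hab.1, ?_⟩
  rintro rfl
  exact hab.2 (by rw [eq_of_nd_one hl h hab.1])

lemma Conn.add_leaf {S : Set V} {X : SimpleGraph V} {l t : V} (hX : Conn (S \ {l}) X)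
    (hl : l ∈ S) (ht : t ∈ S) (htl : t ≠ l) : ¬ X.Adj l t ∧ Conn S (X ⊔ edge l t) := by
  refine ⟨fun h => (hX.mem _ _ h).2 rfl, ⟨l, hl⟩, ?_, ?_⟩
  · intro a b hab
    rw [sup_adj, edge_adj] at hab
    have := hX.mem a b
    grind
  · have hr : ∀ a ∈ S, (X ⊔ edge l t).Reachable t a := by
      intro a ha
      by_cases hal : a = l
      · subst hal
        apply Adj.reachable
        rw [sup_adj, edge_adj]
        grind
      · exact (hX.reach t ⟨ht, htl⟩ a ⟨ha, hal⟩).mono le_sup_left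
    exact fun a ha b hb => (hr a ha).symm.trans (hr b hb)

lemma Conn.delete_edge {S : Set V} {G : SimpleGraph V} (hG : Conn S G) {x y : V}
    (h : (G.deleteEdges {s(x, y)}).Reachable x y) : Conn S (G.deleteEdges {s(x, y)}) := by
  refine ⟨hG.nonempty, fun a b hab => hG.mem a b (deleteEdges_le _ hab), fun a ha b hb =>
    reachable_transfer ?_ (hG.reach a ha b hb)⟩
  intro a b hab
  by_cases hE : s(a, b) = s(x, y)
  · rw [Sym2.eq_iff] at hE
    obtain ⟨rfl, rfl⟩ | ⟨rfl, rfl⟩ := hE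
    · exact h
    · exact h.symm
  · exact Adj.reachable (by simp only [deleteEdges_adj]; exact ⟨hab, hE⟩)

lemma Conn.add_edge {S : Set V} {X : SimpleGraph V} {x y : V} (hX : Conn S X)
    (hx : x ∈ S) (hy : y ∈ S) : Conn S (X ⊔ edge x y) := by
  refine ⟨hX.nonempty, ?_, fun a ha b hb => (hX.reach a ha b hb).mono le_sup_left⟩
  intro a b hab
  rw [sup_adj, edge_adj] at hab
  have := hX.mem a b
  grind

lemma nd_delete_congr [Finite V] {G G' : SimpleGraph V} (hd : ∀ v, nd G v = nd G' v) {x y : V}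
    (h : G.Adj x y) (h' : G'.Adj x y) (v : V) :
    nd (G.deleteEdges {s(x, y)}) v = nd (G'.deleteEdges {s(x, y)}) v := by
  classical
  rw [nd_delete h, nd_delete h', hd]

lemma nd_eq_zero {S : Set V} {G : SimpleGraph V} (hG : Conn S G) {v : V} (hv : v ∉ S) :
    nd G v = 0 := by
  have : G.neighborSet v = ∅ := by
    ext u
    simp only [mem_neighborSet, Set.mem_empty_iff_false, iff_false]
    exact fun h => hv (hG.mem _ _ h)
  rw [nd, this, Set.ncard_empty]

/-- With at most `|S|` edges and all degrees on `S` at least two, all these degrees are two. -/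
lemma nd_eq_two [Fintype V] {S : Set V} {G : SimpleGraph V}
    (hcard : G.edgeSet.ncard ≤ S.ncard) (h2 : ∀ v ∈ S, 2 ≤ nd G v) (v : V) (hv : v ∈ S) :
    nd G v = 2 := by
  classical
  have hle : ∀ u ∈ Finset.univ, (if u ∈ S then 2 else 0) ≤ nd G u := by
    intro u _
    split_ifs with hu
    · exact h2 u hu
    · exact Nat.zero_le _
  have hsum : ∑ u : V, (if u ∈ S then 2 else 0) = 2 * S.ncard := by
    rw [← Finset.sum_filter, Finset.sum_const, smul_eq_mul, mul_comm,
      Set.ncard_eq_toFinset_card']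
    congr 2
    ext; simp
  have heq := (Finset.sum_eq_sum_iff_of_le hle).mp (le_antisymm (Finset.sum_le_sum hle) (by
    rw [sum_nd, hsum]; omega)) v (Finset.mem_univ v)
  rw [if_pos hv] at heq
  exact heq.symm

/-! ### The induction on the number of edges -/

/-- Two graphs connected on `S`, with equal degrees and at most `|S|` edges (trees or unicyclic
graphs on `S`), are joined by switches through graphs connected on `S`. -/
theorem steps_of_conn [Fintype V] (n : ℕ) : ∀ (S : Set V) (G G' : SimpleGraph V),
    G.edgeSet.ncard = n → n ≤ S.ncard → Conn S G → Conn S G' → (∀ v, nd G v = nd G' v) →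
    Relation.ReflTransGen (Step S) G G' := by
  classical
  induction n using Nat.strong_induction_on with
  | _ n ih =>
  intro S G G' hn hnS hG hG' hd
  by_cases hsub : S.Subsingleton
  · -- On one vertex both graphs are empty.
    have hbot : ∀ X : SimpleGraph V, Conn S X → X = ⊥ := by
      intro X hX
      ext a b
      simp only [bot_adj, iff_false]
      exact fun h => h.ne (hsub (hX.mem _ _ h) (hX.mem _ _ h.symm))
    rw [hbot G hG, hbot G' hG']
  rw [Set.not_subsingleton_iff] at hsub
  have hdeg1 : ∀ v ∈ S, 1 ≤ nd G v := by
    intro v hv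
    obtain ⟨u, hu, huv⟩ := hsub.exists_ne v
    obtain ⟨c, hc⟩ := hG.exists_adj hv hu huv.symm
    exact (Set.ncard_pos).mpr ⟨c, hc⟩
  by_cases hleaf : ∃ l ∈ S, nd G l = 1
  · obtain ⟨l, hlS, hl⟩ := hleaf
    have hl' : nd G' l = 1 := by rw [← hd, hl]
    -- It suffices to reach graphs `A`, `B` in which the leaf `l` has the same neighbour `t`: then
    -- `l` is removed from both.
    have finish : ∀ A B t, Relation.ReflTransGen (Step S) G A → Conn S A →
        Relation.ReflTransGen (Step S) G' B → Conn S B → A.Adj l t → B.Adj l t →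
        Relation.ReflTransGen (Step S) G G' := by
      intro A B t hGA hA hGB hB hAt hBt
      have hdA : ∀ v, nd A v = nd G v := steps_nd hGA
      have hdB : ∀ v, nd B v = nd G' v := steps_nd hGB
      have hAl : nd A l = 1 := by rw [hdA, hl]
      have hBl : nd B l = 1 := by rw [hdB, hl']
      have hcA := edges_eq_of_nd hdA
      have hdel := edges_delete hAt
      have hScard := Set.ncard_sdiff_singleton_add_one hlS
      have htS := hA.mem _ _ hAt.symm
      have hsteps := ih _ (by omega) (S \ {l}) (A.deleteEdges {s(l, t)})
        (B.deleteEdges {s(l, t)}) rfl (by omega) (hA.delete_leaf hAt hAl)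
        (hB.delete_leaf hBt hBl)
        (nd_delete_congr (fun v => by rw [hdA, hdB, hd]) hAt hBt)
      have hlift := steps_lift (S := S) (x := l) (y := t)
        (fun X hX _ => hX.add_leaf hlS htS hAt.ne') hsteps
      rw [delete_sup_edge hAt, delete_sup_edge hBt] at hlift
      exact (hGA.trans hlift).trans (steps_symm hGB)
    obtain ⟨u, hu, hul⟩ := hsub.exists_ne l
    obtain ⟨v, hv⟩ := hG.exists_adj hlS hu hul.symm
    obtain ⟨t, ht⟩ := hG'.exists_adj hlS hu hul.symm
    have hvS := hG.mem _ _ hv.symm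
    have htS := hG'.mem _ _ ht.symm
    by_cases hvt : v = t
    · subst hvt
      exact finish G G' v .refl hG .refl hG' hv ht
    have hv2 : 2 ≤ nd G v := by
      -- The neighbours of `l` are not leaves: `S` has the three vertices `l`, `v`, `t`.
      by_contra hcon
      have h1 := hdeg1 v hvS
      rcases hG.eq_or_eq hv hl (by omega) htS with h | h
      · exact ht.ne h.symm
      · exact hvt h.symm
    have ht2 : 2 ≤ nd G t := by
      by_contra hcon
      have h1 := hdeg1 t htS
      rcases hG'.eq_or_eq ht hl' (by rw [← hd]; omega) hvS with h | h
      · exact hv.ne h.symm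
      · exact hvt h
    rcases le_total (nd G v) (nd G t) with hle | hle
    · obtain ⟨A, hGA, hA⟩ := exists_switch hG hv htS ht.ne'
        (fun h => hvt (eq_of_nd_one hl h hv)) (hG.leaf_reach hv hl) hle ht2
      exact finish A G' t (.single hGA) hGA.2.2 .refl hG' hA ht
    · obtain ⟨B, hGB, hB⟩ := exists_switch hG' ht hvS hv.ne'
        (fun h => hvt (eq_of_nd_one hl' ht h)) (hG'.leaf_reach ht hl')
        (by rw [← hd, ← hd]; exact hle) (by rw [← hd]; exact hv2)
      exact finish G B v .refl hG (.single hGB) hGB.2.2 hv hB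
  · -- Without leaves both graphs are cycles on `S`.
    have hdeg2 : ∀ v ∈ S, nd G v = 2 := by
      refine nd_eq_two (by omega) fun v hv => ?_
      have := hdeg1 v hv
      have : nd G v ≠ 1 := fun h => hleaf ⟨v, hv, h⟩
      omega
    have heven : ∀ v, Even (nd G v) := by
      intro v
      by_cases hv : v ∈ S
      · rw [hdeg2 v hv]; exact even_two
      · rw [nd_eq_zero hG hv]; exact Even.zero
    obtain ⟨x, hxS, u, huS, hxu⟩ := hsub
    obtain ⟨y, hy⟩ := hG'.exists_adj hxS huS hxu
    have hyS := hG'.mem _ _ hy.symm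
    -- It suffices to reach a graph `A` sharing the edge `xy` with `G'`: deleting this edge turns
    -- both cycles into paths on `S` with fewer edges.
    have finish : ∀ A, Relation.ReflTransGen (Step S) G A → Conn S A → A.Adj x y →
        Relation.ReflTransGen (Step S) G G' := by
      intro A hGA hA hAy
      have hdA : ∀ v, nd A v = nd G v := steps_nd hGA
      have hcA := edges_eq_of_nd hdA
      have hdel := edges_delete hAy
      have hAr := reachable_of_even (fun v => by rw [hdA]; exact heven v) hAy
      have hBr := reachable_of_even (fun v => by rw [← hd]; exact heven v) hy
      have hsteps := ih _ (by omega) S (A.deleteEdges {s(x, y)})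
        (G'.deleteEdges {s(x, y)}) rfl (by omega) (hA.delete_edge hAr)
        (hG'.delete_edge hBr) (nd_delete_congr (fun v => by rw [hdA, hd]) hAy hy)
      have hlift := steps_lift (S := S) (x := x) (y := y) (fun X hX hdX => by
        refine ⟨fun hXxy => ?_, hX.add_edge hxS hyS⟩
        -- `x` and `y` are leaves of `X`, so if adjacent they exhaust `S`; but `x` has a second
        -- neighbour in `A`.
        have h1 : ∀ z, z = x ∨ z = y → nd X z = 1 := by
          intro z hz
          have hzS : z ∈ S := by rcases hz with rfl | rfl <;> assumption
          rw [hdX, nd_delete hAy, if_pos hz, hdA, hdeg2 z hzS]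
        obtain ⟨z, hz, hzy⟩ := Set.exists_ne_of_one_lt_ncard (s := A.neighborSet x) (by
          have := hdA x
          rw [hdeg2 x hxS] at this
          unfold nd at this
          omega) y
        rcases hX.eq_or_eq hXxy (h1 x (Or.inl rfl)) (h1 y (Or.inr rfl))
          (hA.mem _ _ (A.adj_symm hz)) with h | h
        · rw [h] at hz; exact A.loopless.irrefl _ hz
        · exact hzy h) hsteps
      rw [delete_sup_edge hAy, delete_sup_edge hy] at hlift
      exact hGA.trans hlift
    by_cases hxy : G.Adj x y
    · exact finish G .refl hG hxy
    obtain ⟨v, hv⟩ := hG.exists_adj hxS huS hxu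
    have hvS := hG.mem _ _ hv.symm
    have hconn := hG.delete_edge (reachable_of_even heven hv)
    obtain ⟨A, hGA, hA⟩ := exists_switch hG hv hyS hy.ne' hxy
      (fun u hu _ => hconn.reach v hvS u hu) (by rw [hdeg2 v hvS, hdeg2 y hyS])
      (by rw [hdeg2 y hyS])
    exact finish A (.single hGA) hGA.2.2 hA

/-- any two unicyclic graphs on the same vertex set with the same degree
sequence are related by a finite sequence of nontrivial 2-switches all of whose intermediate
graphs are unicyclic. -/
theorem stmt12 {V : Type*} [Fintype V] (U U' : SimpleGraph V)
    (hU : Unicyclic U) (hU' : Unicyclic U')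
    (hdeg : ∀ v : V, (U.neighborSet v).ncard = (U'.neighborSet v).ncard) :
    Relation.ReflTransGen (fun X Y : SimpleGraph V => SwitchStep X Y ∧ Unicyclic Y) U U' := by
  have hconn : ∀ X : SimpleGraph V, X.Connected → Conn Set.univ X := fun X hX =>
    ⟨⟨hX.nonempty.some, trivial⟩, fun _ _ _ => trivial, fun a _ b _ => hX.preconnected a b⟩
  have hsteps := steps_of_conn _ Set.univ U U' rfl (by rw [hU.card, Set.ncard_univ])
    (hconn U hU.1) (hconn U' hU'.1) hdeg
  clear hU' hdeg
  induction hsteps with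
  | refl => exact .refl
  | tail h1 h2 ih =>
    refine ih.tail ⟨h2.1, unicyclic_of_card ?_ ?_⟩
    · have := hU.1.nonempty
      exact ⟨fun a b => h2.2.2.reach a trivial b trivial⟩
    · rw [edges_eq_of_nd (steps_nd (h1.tail h2)), hU.card]
end

section
/- Let G be the disjoint union of a forest F and a unicyclic graph U (on disjoint vertex sets), and let a, b, c, d be four distinct vertices with ab ∈ E(F), cd ∈ E(Forest(U)), and ac, bd ∉ E(G), so that τ = (a b / c d) is a nontrivial 2-switch on G. Then τ(G) is a pseudoforest. -/
/-!
Every edge `ab` of the forest `F` is a bridge, so after deleting it the part `A` of `F` still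
connected to `a` is joined to the rest of the switched graph by the single edge `ac`. In a finite
graph all of whose nonzero degrees equal two no edge is a bridge
(`SimpleGraph.IsCycles.reachable_deleteEdges`); hence no cycle subgraph of the switched graph
contains `ac` and, by the symmetric argument, none contains `bd` (`not_adj_inl_inr`). So a cycle
subgraph has no edge between the two vertex sets. It has no vertex on the forest side, since its
edges there would be non-bridges of `F` (`inl_notMem_verts`), and therefore it is a copy of a cycle
subgraph of `U` (`isCycleSubgraph_restrictInr`). As `U` has only one of these, the switched graph
has at most one cycle subgraph in total.
-/


open SimpleGraph

variable {V : Type*}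

section Switch

variable {V₁ V₂ : Type*} {F : SimpleGraph V₁} {U : SimpleGraph V₂} {a b : V₁} {c d : V₂}

lemma isCycles_spanningCoe {G : SimpleGraph V} {H : G.Subgraph} (hH : IsCycleSubgraph G H) :
    H.spanningCoe.IsCycles := by
  rintro v ⟨w, hw⟩
  exact hH.2 v (H.edge_vert hw)

/-- A set containing `u` that is closed under adjacency contains everything reachable from `u`. -/
lemma mem_of_reachable {G : SimpleGraph V} {S : Set V} (hS : ∀ x ∈ S, ∀ y, G.Adj x y → y ∈ S)
    {u v : V} (h : G.Reachable u v) (hu : u ∈ S) : v ∈ S := by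
  obtain ⟨p⟩ := h
  induction p with
  | nil => exact hu
  | cons hadj _ ih => exact ih (hS _ hu _ hadj)

/-- The edge `ac` lies on no cycle: it is the only edge leaving the part of `F - ab` connected
to `a`. -/
lemma not_adj_inl_inr [Finite V₁] [Finite V₂] {K : SimpleGraph (V₁ ⊕ V₂)}
    (hF : F.IsAcyclic) (hab : F.Adj a b)
    (hll : ∀ x y, K.Adj (.inl x) (.inl y) → F.Adj x y ∧ s(x, y) ≠ s(a, b))
    (hlr : ∀ x y, K.Adj (.inl x) (.inr y) → x = a ∧ y = c ∨ x = b ∧ y = d)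
    (hK : K.IsCycles) : ¬ K.Adj (.inl a) (.inr c) := by
  intro hadj
  have hbridge : ¬ (F.deleteEdges {s(a, b)}).Reachable a b :=
    isBridge_iff.1 (isAcyclic_iff_forall_adj_isBridge.1 hF hab)
  have hmem : (Sum.inr c : V₁ ⊕ V₂) ∈ Sum.inl '' {x | (F.deleteEdges {s(a, b)}).Reachable a x} := by
    refine mem_of_reachable ?_ (hK.reachable_deleteEdges hadj) ⟨a, Reachable.refl a, rfl⟩
    rintro _ ⟨x, hx, rfl⟩ (y | y) hxy
    · rw [deleteEdges_adj] at hxy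
      obtain ⟨h₁, h₂⟩ := hll x y hxy.1
      exact ⟨y, Reachable.trans hx (Adj.reachable (by simp [deleteEdges_adj, h₁, h₂])), rfl⟩
    · rw [deleteEdges_adj] at hxy
      rcases hlr x y hxy.1 with ⟨rfl, rfl⟩ | ⟨rfl, rfl⟩
      · simp at hxy
      · exact absurd hx hbridge
  simp at hmem

lemma twoSwitch_adj_inl_inl {x y : V₁}
    (h : (twoSwitch (F ⊕g U) (.inl a) (.inl b) (.inr c) (.inr d)).Adj (.inl x) (.inl y)) :
    F.Adj x y ∧ s(x, y) ≠ s(a, b) := by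
  simpa [twoSwitch] using h

lemma twoSwitch_adj_inr_inr {x y : V₂}
    (h : (twoSwitch (F ⊕g U) (.inl a) (.inl b) (.inr c) (.inr d)).Adj (.inr x) (.inr y)) :
    U.Adj x y := by
  have : U.Adj x y ∧ s(x, y) ≠ s(c, d) := by simpa [twoSwitch] using h
  exact this.1

lemma twoSwitch_adj_inl_inr {x : V₁} {y : V₂}
    (h : (twoSwitch (F ⊕g U) (.inl a) (.inl b) (.inr c) (.inr d)).Adj (.inl x) (.inr y)) :
    x = a ∧ y = c ∨ x = b ∧ y = d := by
  simpa [twoSwitch] using h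

/-- A cycle subgraph of the switched graph has no edge between the two vertex sets. -/
lemma not_adj_of_isCycleSubgraph [Finite V₁] [Finite V₂] (hF : F.IsAcyclic) (hab : F.Adj a b)
    {H : (twoSwitch (F ⊕g U) (.inl a) (.inl b) (.inr c) (.inr d)).Subgraph}
    (hH : IsCycleSubgraph _ H) (x : V₁) (y : V₂) : ¬ H.Adj (.inl x) (.inr y) := by
  intro h
  have hlr := fun x y (h : H.spanningCoe.Adj (.inl x) (.inr y)) =>
    twoSwitch_adj_inl_inr (H.adj_sub h)
  have hll := fun x y (h : H.spanningCoe.Adj (.inl x) (.inl y)) =>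
    twoSwitch_adj_inl_inl (H.adj_sub h)
  rcases hlr x y h with ⟨rfl, rfl⟩ | ⟨rfl, rfl⟩
  · exact not_adj_inl_inr hF hab hll hlr (isCycles_spanningCoe hH) h
  · refine not_adj_inl_inr hF hab.symm (fun u v huv => ?_) (fun u v huv => (hlr u v huv).symm)
      (isCycles_spanningCoe hH) h
    rw [Sym2.eq_swap (a := x)]
    exact hll u v huv

/-- A cycle subgraph of the switched graph avoids the vertices of the forest. -/
lemma inl_notMem_verts [Finite V₁] [Finite V₂] (hF : F.IsAcyclic) (hab : F.Adj a b)
    {H : (twoSwitch (F ⊕g U) (.inl a) (.inl b) (.inr c) (.inr d)).Subgraph}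
    (hH : IsCycleSubgraph _ H) (x : V₁) : Sum.inl x ∉ H.verts := by
  intro hx
  have hcross := not_adj_of_isCycleSubgraph hF hab hH
  have hnbr : ∀ u, Sum.inl '' ((H.spanningCoe.comap Sum.inl).neighborSet u)
      = H.neighborSet (Sum.inl u) := by
    intro u
    ext (v | v)
    · simp
    · simpa using hcross u v
  have hcard : ∀ u, Sum.inl u ∈ H.verts →
      ((H.spanningCoe.comap Sum.inl).neighborSet u).ncard = 2 := by
    intro u hu
    rw [← Set.ncard_image_of_injective _ (Sum.inl_injective (β := V₂)), hnbr]
    exact hH.2 _ hu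
  have hcyc : (H.spanningCoe.comap Sum.inl).IsCycles := by
    rintro u ⟨v, hv⟩
    exact hcard u (H.edge_vert hv)
  obtain ⟨y, hy⟩ : ((H.spanningCoe.comap Sum.inl).neighborSet x).Nonempty :=
    Set.nonempty_of_ncard_ne_zero (by simp [hcard x hx])
  have hle : H.spanningCoe.comap Sum.inl ≤ F := fun u v huv =>
    (twoSwitch_adj_inl_inl (H.adj_sub huv)).1
  exact isBridge_iff.1 (isAcyclic_iff_forall_adj_isBridge.1 hF (hle hy))
    ((hcyc.reachable_deleteEdges hy).mono (deleteEdges_mono hle))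

/-- The part of a subgraph of the switched graph that lies in `U`, as a subgraph of `U`. -/
def restrictInr (H : (twoSwitch (F ⊕g U) (.inl a) (.inl b) (.inr c) (.inr d)).Subgraph) :
    U.Subgraph where
  verts := Sum.inr ⁻¹' H.verts
  Adj x y := H.Adj (.inr x) (.inr y)
  adj_sub h := twoSwitch_adj_inr_inr (H.adj_sub h)
  edge_vert h := H.edge_vert h
  symm := ⟨fun _ _ h => h.symm⟩

lemma isCycleSubgraph_restrictInr
    {H : (twoSwitch (F ⊕g U) (.inl a) (.inl b) (.inr c) (.inr d)).Subgraph}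
    (hH : IsCycleSubgraph _ H) (hinl : ∀ x, Sum.inl x ∉ H.verts) :
    IsCycleSubgraph U (restrictInr H) := by
  constructor
  · let f : (restrictInr H).verts → H.verts := fun x => ⟨.inr x.1, x.2⟩
    have hf : Function.Bijective f := by
      constructor
      · intro x y h
        exact Subtype.ext (Sum.inr_injective (congrArg Subtype.val h))
      · rintro ⟨x | x, hx⟩
        · exact absurd hx (hinl x)
        · exact ⟨⟨x, hx⟩, rfl⟩
    let e : (restrictInr H).coe ≃g H.coe := ⟨Equiv.ofBijective f hf, Iff.rfl⟩
    exact e.connected_iff.2 hH.1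
  · intro v hv
    have hnbr : Sum.inr '' ((restrictInr H).neighborSet v) = H.neighborSet (Sum.inr v) := by
      ext (w | w)
      · simpa using fun h : H.Adj (.inr v) (.inl w) => hinl w (H.edge_vert h.symm)
      · simp [restrictInr]
    rw [← Set.ncard_image_of_injective _ (Sum.inr_injective (α := V₁)), hnbr]
    exact hH.2 _ hv

lemma eq_of_restrictInr_eq
    {H₁ H₂ : (twoSwitch (F ⊕g U) (.inl a) (.inl b) (.inr c) (.inr d)).Subgraph}
    (h₁ : ∀ x, Sum.inl x ∉ H₁.verts) (h₂ : ∀ x, Sum.inl x ∉ H₂.verts)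
    (h : restrictInr H₁ = restrictInr H₂) : H₁ = H₂ := by
  have hl₁ : ∀ x y, ¬ H₁.Adj (.inl x) y := fun x y hxy => h₁ x (H₁.edge_vert hxy)
  have hl₂ : ∀ x y, ¬ H₂.Adj (.inl x) y := fun x y hxy => h₂ x (H₂.edge_vert hxy)
  refine Subgraph.ext ?_ ?_
  · ext (x | x)
    · simp [h₁, h₂]
    · exact Set.ext_iff.1 (congrArg Subgraph.verts h) x
  · ext (x | x) (y | y)
    · simp [hl₁, hl₂]
    · simp [hl₁, hl₂]
    · simp [H₁.adj_comm (.inr x), H₂.adj_comm (.inr x), hl₁, hl₂]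
    · exact iff_of_eq (congrFun (congrFun (congrArg Subgraph.Adj h) x) y)

end Switch

/-- let G be the disjoint union of a forest F and a unicyclic graph U, and let
τ = (a b / c d) be a nontrivial 2-switch on G with ab ∈ E(F) and cd ∈ E(Forest(U)). Then
τ(G) is a pseudoforest. -/
theorem stmt13 {V₁ V₂ : Type*} [Fintype V₁] [Fintype V₂]
    (F : SimpleGraph V₁) (hF : F.IsAcyclic)
    (U : SimpleGraph V₂) (hU : Unicyclic U)
    (a b : V₁) (c d : V₂)
    (hab : F.Adj a b) (hcd : (forestPart U).Adj c d)
    (hac : ¬ (F ⊕g U).Adj (Sum.inl a) (Sum.inr c))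
    (hbd : ¬ (F ⊕g U).Adj (Sum.inl b) (Sum.inr d)) :
    Pseudoforest (twoSwitch (F ⊕g U) (Sum.inl a) (Sum.inl b) (Sum.inr c) (Sum.inr d)) := by
  intro H₁ H₂ hH₁ hH₂ _
  have h₁ := inl_notMem_verts hF hab hH₁
  have h₂ := inl_notMem_verts hF hab hH₂
  exact eq_of_restrictInr_eq h₁ h₂ (hU.2.unique (isCycleSubgraph_restrictInr hH₁ h₁)
    (isCycleSubgraph_restrictInr hH₂ h₂))
end

section
/- Let G be a pseudoforest and let a, b, c, d be four distinct vertices with ab, cd ∈ E(G) and ac, bd ∉ E(G), so that τ = (a b / c d) is a nontrivial 2-switch on G. If either (ab ∈ E(Forest(G)) and cd ∈ E(Cycles(G))) or (ab ∈ E(Cycles(G)) and cd ∈ E(Cycles(G))), then τ(G) is a pseudoforest. -/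
/-!
A finite graph is a pseudoforest exactly when every vertex set `S` induces at most `|S|` edges
(`sparse_of_pseudoforest`, `pseudoforest_of_sparse`); here edges inside `S` are counted as darts,
two per edge. Call `S` tight if equality holds.

* A pseudoforest is sparse: a minimal set `S` with more than `|S|` edges contains a cycle, and still
  contains one after an edge of the first cycle is deleted. By minimality `S` lies in one connected
  component of `G`, which thus has two cycles.
* A sparse graph is a pseudoforest: the vertex set of a cycle is tight, a tight set meeting a cycle
  contains it (`verts_subset_of_tight`, by supermodularity), and disjoint tight sets are not joined
  by a walk. So two cycles in one component have the same vertices, and sparsity makes them induced.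

The switch `G - ab - cd + ac + bd` can raise the number of edges inside `S` only if `S` contains
exactly one of the pairs `{a, c}`, `{b, d}` and no vertex of the other, and then by one. This breaks
sparsity only if `S` is tight in `G`. But `S` contains exactly one end of `cd`, which lies on a
cycle, whereas a tight set containing one end contains the whole cycle.
-/


open SimpleGraph

variable {V : Type*}

/-! ### Counting the edges inside a vertex set -/

open Classical in
/-- The ordered pairs `(u, v)` in `S × S` that are adjacent in `G`: the darts of the subgraph
induced on `S`. There are twice as many of them as induced edges. -/
noncomputable def dartsIn (G : SimpleGraph V) (S : Finset V) : Finset (V × V) :=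
  (S ×ˢ S).filter fun p => G.Adj p.1 p.2

/-- `G` is sparse when every vertex set `S` induces at most `|S|` edges, expressed through darts.
For finite graphs this is equivalent to being a pseudoforest. -/
def Sparse (G : SimpleGraph V) : Prop :=
  ∀ S : Finset V, (dartsIn G S).card ≤ 2 * S.card

lemma mem_dartsIn {G : SimpleGraph V} {S : Finset V} {p : V × V} :
    p ∈ dartsIn G S ↔ (p.1 ∈ S ∧ p.2 ∈ S) ∧ G.Adj p.1 p.2 := by
  simp [dartsIn]

open Classical in
lemma card_dartsIn_eq_sum (G : SimpleGraph V) (S : Finset V) :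
    (dartsIn G S).card = ∑ v ∈ S, (S.filter (G.Adj v)).card := by
  simp only [dartsIn, Finset.card_filter, Finset.sum_product]

open Classical in
/-- The handshake lemma for the subgraph induced on `S`. -/
lemma card_dartsIn_eq_edges (G : SimpleGraph V) (S : Finset V) :
    (dartsIn G S).card = 2 * (G.induce (S : Set V)).edgeFinset.card := by
  rw [← dart_card_eq_twice_card_edges, ← Finset.card_univ]
  symm
  refine Finset.card_bij (fun x _ => (x.fst.1, x.snd.1)) ?_ ?_ ?_
  · intro x _
    exact mem_dartsIn.2 ⟨⟨x.fst.2, x.snd.2⟩, x.adj⟩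
  · rintro ⟨⟨x, y⟩, h⟩ _ ⟨⟨x', y'⟩, h'⟩ _ hxy
    simp only [Prod.mk.injEq] at hxy
    ext
    · exact hxy.1
    · exact hxy.2
  · rintro ⟨x, y⟩ h
    obtain ⟨⟨hx, hy⟩, hxy⟩ := mem_dartsIn.1 h
    exact ⟨⟨(⟨x, hx⟩, ⟨y, hy⟩), hxy⟩, Finset.mem_univ _, rfl⟩

/-- An acyclic graph extends to a spanning tree of the complete graph on `S`, so it has fewer
than `|S|` edges inside a nonempty `S`. -/
lemma card_dartsIn_of_isAcyclic {G : SimpleGraph V} (hG : G.IsAcyclic) {S : Finset V}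
    (hS : S.Nonempty) : (dartsIn G S).card + 2 ≤ 2 * S.card := by
  classical
  have : Nonempty (S : Set V) := hS.to_subtype
  obtain ⟨F, hle, -, hF⟩ := (connected_top (V := (S : Set V))).exists_isTree_le_of_le_of_isAcyclic
    le_top (hG.induce (S : Set V))
  have h1 := hF.card_edgeFinset
  have h2 := Finset.card_le_card (edgeFinset_mono hle)
  have h3 : Fintype.card (S : Set V) = S.card := by simp
  rw [card_dartsIn_eq_edges]
  omega

open Classical in
/-- Supermodularity of the number of induced edges. -/
lemma card_dartsIn_supermodular (G : SimpleGraph V) (S T : Finset V) :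
    (dartsIn G S).card + (dartsIn G T).card ≤
      (dartsIn G (S ∪ T)).card + (dartsIn G (S ∩ T)).card := by
  rw [← Finset.card_union_add_card_inter]
  apply Nat.add_le_add <;> apply Finset.card_le_card <;> intro p <;>
    simp only [Finset.mem_union, Finset.mem_inter, mem_dartsIn] <;> tauto

open Classical in
/-- An edge between disjoint sets makes supermodularity strict. -/
lemma card_dartsIn_union_of_adj {G : SimpleGraph V} {S T : Finset V} (hST : Disjoint S T)
    {x y : V} (hx : x ∈ S) (hy : y ∈ T) (hxy : G.Adj x y) :
    (dartsIn G S).card + (dartsIn G T).card + 2 ≤ (dartsIn G (S ∪ T)).card := by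
  have hyS : y ∉ S := Finset.disjoint_right.1 hST hy
  have hxT : x ∉ T := Finset.disjoint_left.1 hST hx
  have h1 : Disjoint (dartsIn G S) (dartsIn G T) := by
    rw [Finset.disjoint_left]
    intro p hp hp'
    exact Finset.disjoint_left.1 hST (mem_dartsIn.1 hp).1.1 (mem_dartsIn.1 hp').1.1
  have h2 : Disjoint (dartsIn G S ∪ dartsIn G T) {(x, y), (y, x)} := by
    rw [Finset.disjoint_left]
    intro p hp hp'
    simp only [Finset.mem_union, mem_dartsIn, Finset.mem_insert, Finset.mem_singleton] at hp hp'
    rcases hp' with rfl | rfl <;> simp_all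
  have h3 : ({(x, y), (y, x)} : Finset (V × V)).card = 2 :=
    Finset.card_pair (by simp [hxy.ne])
  rw [← h3, ← Finset.card_union_of_disjoint h1, ← Finset.card_union_of_disjoint h2]
  apply Finset.card_le_card
  intro p
  simp only [Finset.mem_union, mem_dartsIn, Finset.mem_insert, Finset.mem_singleton]
  rintro ((h | h) | (rfl | rfl))
  · tauto
  · tauto
  · exact ⟨⟨.inl hx, .inr hy⟩, hxy⟩
  · exact ⟨⟨.inr hy, .inl hx⟩, hxy.symm⟩

/-! ### Cycle subgraphs in sparse graphs -/

section Cycles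

variable [Fintype V]

open Classical in
lemma two_le_card_neighbors {G : SimpleGraph V} {H : G.Subgraph} (hH : IsCycleSubgraph G H)
    {v : V} (hv : v ∈ H.verts) : 2 ≤ (H.verts.toFinset.filter (G.Adj v)).card := by
  rw [← hH.2 v hv, Set.ncard_eq_toFinset_card']
  apply Finset.card_le_card
  intro w hw
  have hw : H.Adj v w := by simpa using hw
  simpa using ⟨hw.snd_mem, hw.adj_sub⟩

open Classical in
lemma two_mul_card_le_of_isCycleSubgraph {G : SimpleGraph V} {H : G.Subgraph}
    (hH : IsCycleSubgraph G H) :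
    2 * H.verts.toFinset.card ≤ (dartsIn G H.verts.toFinset).card := by
  rw [card_dartsIn_eq_sum, mul_comm, ← smul_eq_mul]
  apply Finset.card_nsmul_le_sum
  intro v hv
  exact two_le_card_neighbors hH (by simpa using hv)

open Classical in
/-- In a sparse graph cycle subgraphs are induced: no vertex has a third neighbour on the cycle. -/
lemma card_neighbors_eq_two {G : SimpleGraph V} (hG : Sparse G) {H : G.Subgraph}
    (hH : IsCycleSubgraph G H) {v : V} (hv : v ∈ H.verts) :
    (H.verts.toFinset.filter (G.Adj v)).card = 2 := by
  have h1 := hG H.verts.toFinset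
  have h2 := two_mul_card_le_of_isCycleSubgraph hH
  have h3 : ∑ v ∈ H.verts.toFinset, 2 =
      ∑ v ∈ H.verts.toFinset, (H.verts.toFinset.filter (G.Adj v)).card := by
    rw [← card_dartsIn_eq_sum, Finset.sum_const, smul_eq_mul]
    omega
  rw [Finset.sum_eq_sum_iff_of_le] at h3
  · exact (h3 v (by simpa using hv)).symm
  · intro v hv
    exact two_le_card_neighbors hH (by simpa using hv)

open Classical in
lemma adj_iff_of_sparse {G : SimpleGraph V} (hG : Sparse G) {H : G.Subgraph}
    (hH : IsCycleSubgraph G H) {v w : V} (hv : v ∈ H.verts) :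
    H.Adj v w ↔ w ∈ H.verts ∧ G.Adj v w := by
  have h1 : (H.neighborSet v).toFinset = H.verts.toFinset.filter (G.Adj v) := by
    apply Finset.eq_of_subset_of_card_le
    · intro w hw
      have hw : H.Adj v w := by simpa using hw
      simpa using ⟨hw.snd_mem, hw.adj_sub⟩
    · rw [card_neighbors_eq_two hG hH hv, ← Set.ncard_eq_toFinset_card', hH.2 v hv]
  simpa using congrArg (w ∈ ·) h1

open Classical in
/-- A tight set (one inducing as many edges as it has vertices) that meets a cycle contains it.
Otherwise the intersection `X` is a proper part of the cycle, hence induces fewer than `|X|`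
edges, and supermodularity makes the union too dense. -/
lemma verts_subset_of_tight {G : SimpleGraph V} (hG : Sparse G) {H : G.Subgraph}
    (hH : IsCycleSubgraph G H) {S : Finset V} (hS : 2 * S.card ≤ (dartsIn G S).card)
    {c : V} (hcS : c ∈ S) (hcH : c ∈ H.verts) : H.verts ⊆ S := by
  intro z hzH
  by_contra hzS
  obtain ⟨p⟩ := hH.1.preconnected ⟨c, hcH⟩ ⟨z, hzH⟩
  obtain ⟨e, -, he1, he2⟩ := p.exists_boundary_dart {x | x.1 ∈ S} hcS hzS
  have hadj : G.Adj e.fst.1 e.snd.1 := (show H.Adj e.fst.1 e.snd.1 from e.adj).adj_sub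
  simp only [Set.mem_ofPred_eq] at he1 he2
  set C := H.verts.toFinset with hC
  have hX : (dartsIn G (S ∩ C)).card < 2 * (S ∩ C).card := by
    rw [card_dartsIn_eq_sum, mul_comm, ← smul_eq_mul, ← Finset.sum_const]
    have hle : ∀ v ∈ S ∩ C, ((S ∩ C).filter (G.Adj v)) ⊆ C.filter (G.Adj v) := fun v _ =>
      Finset.filter_subset_filter _ Finset.inter_subset_right
    have h2 : ∀ v ∈ S ∩ C, (C.filter (G.Adj v)).card = 2 := fun v hv =>
      card_neighbors_eq_two hG hH (by simpa [hC] using (Finset.mem_inter.1 hv).2)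
    have hmem : e.fst.1 ∈ S ∩ C := by simp [hC, he1]
    apply Finset.sum_lt_sum
    · intro v hv
      exact (Finset.card_le_card (hle v hv)).trans_eq (h2 v hv)
    · refine ⟨e.fst.1, hmem, ?_⟩
      rw [← h2 _ hmem]
      apply Finset.card_lt_card
      refine (Finset.ssubset_iff_of_subset (hle _ hmem)).2 ⟨e.snd.1, ?_, ?_⟩
      · simp [hC, hadj]
      · simp [he2]
  have h1 := card_dartsIn_supermodular G S C
  have h2 := two_mul_card_le_of_isCycleSubgraph hH
  have h3 := hG (S ∪ C)
  have h4 := Finset.card_union_add_card_inter S C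
  rw [← hC] at h2
  omega

open Classical in
/-- Two disjoint tight sets are never joined by a walk in a sparse graph: extending `S` along the
walk keeps it tight until an edge to `T` appears, and then the union is too dense. -/
lemma not_reachable_of_tight {G : SimpleGraph V} (hG : Sparse G) {T : Finset V}
    (hT : 2 * T.card ≤ (dartsIn G T).card) {u v : V} (p : G.Walk u v) (hv : v ∈ T) :
    ∀ S : Finset V, 2 * S.card ≤ (dartsIn G S).card → Disjoint S T → u ∉ S := by
  induction p with
  | nil => exact fun S _ hST hu => Finset.disjoint_left.1 hST hu hv
  | @cons u w v h p ih =>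
    intro S hS hST hu
    by_cases hwS : w ∈ S
    · exact ih hv S hS hST hwS
    by_cases hwT : w ∈ T
    · have h1 := card_dartsIn_union_of_adj hST hu hwT h
      have h2 := hG (S ∪ T)
      rw [Finset.card_union_of_disjoint hST] at h2
      omega
    · have hdisj : Disjoint S {w} := by simpa using hwS
      refine ih hv (S ∪ {w}) ?_ ?_ (by simp)
      · have h1 := card_dartsIn_union_of_adj hdisj hu (Finset.mem_singleton_self w) h
        rw [Finset.card_union_of_disjoint hdisj, Finset.card_singleton]
        omega
      · rw [Finset.disjoint_union_left]
        exact ⟨hST, by simpa using hwT⟩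

lemma pseudoforest_of_sparse {G : SimpleGraph V} (hG : Sparse G) : Pseudoforest G := by
  classical
  rintro H₁ H₂ h₁ h₂ ⟨u, hu, v, hv, ⟨p⟩⟩
  have t₁ := two_mul_card_le_of_isCycleSubgraph h₁
  have t₂ := two_mul_card_le_of_isCycleSubgraph h₂
  have hmeet : ¬ Disjoint H₁.verts.toFinset H₂.verts.toFinset := fun hd =>
    not_reachable_of_tight hG t₂ p (by simpa using hv) _ t₁ hd (by simpa using hu)
  obtain ⟨x, hx₁, hx₂⟩ := Finset.not_disjoint_iff.1 hmeet
  have hverts : H₁.verts = H₂.verts := by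
    apply Set.Subset.antisymm
    · simpa using verts_subset_of_tight hG h₁ t₂ hx₂ (by simpa using hx₁)
    · simpa using verts_subset_of_tight hG h₂ t₁ hx₁ (by simpa using hx₂)
  refine Subgraph.ext hverts ?_
  ext x y
  constructor
  · intro h
    exact (adj_iff_of_sparse hG h₂ (hverts ▸ h.fst_mem)).2 ⟨hverts ▸ h.snd_mem, h.adj_sub⟩
  · intro h
    exact (adj_iff_of_sparse hG h₁ (hverts ▸ h.fst_mem)).2 ⟨hverts ▸ h.snd_mem, h.adj_sub⟩

/-! ### Pseudoforests are sparse -/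

/-- The graph on the whole vertex type that keeps only the edges of `G` inside `S`. -/
def restrictTo (G : SimpleGraph V) (S : Finset V) : SimpleGraph V where
  Adj x y := G.Adj x y ∧ x ∈ S ∧ y ∈ S
  symm := ⟨fun _ _ h => ⟨h.1.symm, h.2.2, h.2.1⟩⟩
  loopless := ⟨fun _ h => h.1.ne rfl⟩

/-- If a subgraph `K` of `G`, with all edges inside a nonempty `S`, has at least `|S|` edges, then
it contains a cycle, viewed here as a cycle subgraph of `G`. -/
lemma exists_cycle_of_dense {G K : SimpleGraph V} {S : Finset V} (hKG : K ≤ restrictTo G S)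
    (hS : S.Nonempty) (h : 2 * S.card < (dartsIn K S).card + 2) :
    ∃ H : G.Subgraph, IsCycleSubgraph G H ∧ (∀ x y, H.Adj x y → K.Adj x y) ∧
      ∃ x ∈ S, ∃ y, H.Adj x y := by
  have hK : ¬ K.IsAcyclic := fun hK => by
    have := card_dartsIn_of_isAcyclic hK hS
    omega
  simp only [IsAcyclic, not_forall, not_not] at hK
  obtain ⟨u, p, hp⟩ := hK
  have hle : K ≤ G := fun x y hxy => (hKG hxy).1
  have hp' := hp.mapLe hle
  have hsub : ∀ x y, (p.mapLe hle).toSubgraph.Adj x y → K.Adj x y := by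
    intro x y hxy
    rw [Walk.adj_toSubgraph_iff_mem_edges, Walk.edges_mapLe_eq_edges] at hxy
    exact p.adj_of_mem_edges hxy
  have hcyc : ∀ v ∈ (p.mapLe hle).toSubgraph.verts,
      ((p.mapLe hle).toSubgraph.neighborSet v).ncard = 2 := fun v hv =>
    hp'.ncard_neighborSet_toSubgraph_eq_two ((Walk.mem_verts_toSubgraph _).1 hv)
  refine ⟨(p.mapLe hle).toSubgraph, ⟨(Walk.toSubgraph_connected _).coe, hcyc⟩, hsub, ?_⟩
  have h2 := hcyc _ (Walk.start_mem_verts_toSubgraph _)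
  obtain ⟨y, hy⟩ := Set.nonempty_of_ncard_ne_zero (h2.trans_ne two_ne_zero)
  exact ⟨_, (hKG (hsub _ _ hy)).2.1, y, hy⟩

lemma sparse_of_pseudoforest {G : SimpleGraph V} (hG : Pseudoforest G) : Sparse G := by
  classical
  intro S
  -- In a minimal dense set, two cycles in different components of `G` cannot occur.
  induction S using Finset.strongInduction with
  | H S ih =>
  by_contra! hS
  have hne : S.Nonempty := by
    rw [Finset.nonempty_iff_ne_empty]
    rintro rfl
    simp [dartsIn] at hS
  have hK : dartsIn (restrictTo G S) S = dartsIn G S := by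
    ext p
    simp only [mem_dartsIn, restrictTo]
    tauto
  obtain ⟨H₁, h₁, -, x, hx, y, hxy⟩ := exists_cycle_of_dense (le_refl (restrictTo G S)) hne
    (by rw [hK]; omega)
  -- Deleting an edge of the first cycle still leaves at least `|S|` edges.
  have hdel : (dartsIn G S).card ≤
      (dartsIn ((restrictTo G S).deleteEdges {s(x, y)}) S).card + 2 := by
    refine (Finset.card_le_card ?_).trans ((Finset.card_union_le _ {(x, y), (y, x)}).trans
      (Nat.add_le_add_left Finset.card_le_two _))
    rintro ⟨p, q⟩ hp
    rw [← hK] at hp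
    simp only [Finset.mem_union, mem_dartsIn, deleteEdges_adj, Finset.mem_insert,
      Finset.mem_singleton, Set.mem_singleton_iff, Sym2.eq_iff, Prod.mk.injEq] at hp ⊢
    tauto
  obtain ⟨H₂, h₂, hsub, x', hx', y', hxy'⟩ := exists_cycle_of_dense
    (deleteEdges_le (G := restrictTo G S) {s(x, y)}) hne (by omega)
  have hnot : ¬ G.Reachable x x' := by
    intro hr
    have heq := hG H₁ H₂ h₁ h₂ ⟨x, hxy.fst_mem, x', hxy'.fst_mem, hr⟩
    have := hsub x y (heq ▸ hxy)
    simp at this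
  have hsplit : dartsIn G S ⊆ dartsIn G (S.filter (G.Reachable x)) ∪
      dartsIn G (S.filter fun z => ¬ G.Reachable x z) := by
    rintro ⟨p, q⟩ hp
    obtain ⟨⟨hp, hq⟩, hpq⟩ := mem_dartsIn.1 hp
    have hiff : G.Reachable x p ↔ G.Reachable x q :=
      ⟨fun h => h.trans hpq.reachable, fun h => h.trans hpq.symm.reachable⟩
    simp only [Finset.mem_union, mem_dartsIn, Finset.mem_filter]
    tauto
  have hcard := (Finset.card_le_card hsplit).trans (Finset.card_union_le _ _)
  have i₁ := ih (S.filter (G.Reachable x)) (Finset.filter_ssubset.2 ⟨x', hx', hnot⟩)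
  have i₂ := ih (S.filter fun z => ¬ G.Reachable x z)
    (Finset.filter_ssubset.2 ⟨x, hx, not_not.2 (Reachable.refl x)⟩)
  have := Finset.card_filter_add_card_filter_not (s := S) (G.Reachable x)
  omega

end Cycles

/-! ### Effect of a switch on the number of induced edges -/

lemma twoSwitch_adj_imp {G : SimpleGraph V} {a b c d x y : V}
    (h : (twoSwitch G a b c d).Adj x y) :
    (G.Adj x y ∧ s(x, y) ≠ s(a, b) ∧ s(x, y) ≠ s(c, d)) ∨ s(x, y) = s(a, c) ∨
      s(x, y) = s(b, d) := by
  simp only [twoSwitch, sup_adj, deleteEdges_adj, fromEdgeSet_adj, Set.mem_insert_iff,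
    Set.mem_singleton_iff, not_or] at h
  tauto

open Classical in
/-- The number of induced edges drops by the removed edges inside `S` and grows by at most the
added edges inside `S`. -/
lemma card_dartsIn_twoSwitch_le {G : SimpleGraph V} {a b c d : V} (hdist : [a, b, c, d].Nodup)
    (hab : G.Adj a b) (hcd : G.Adj c d) (S : Finset V) :
    (dartsIn (twoSwitch G a b c d) S).card + (if a ∈ S ∧ b ∈ S then 2 else 0) +
        (if c ∈ S ∧ d ∈ S then 2 else 0) ≤
      (dartsIn G S).card + (if a ∈ S ∧ c ∈ S then 2 else 0) +
        (if b ∈ S ∧ d ∈ S then 2 else 0) := by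
  simp only [List.nodup_cons, List.mem_cons, List.not_mem_nil, or_false, not_or] at hdist
  obtain ⟨⟨nab, nac, nad⟩, ⟨nbc, nbd⟩, ncd, -⟩ := hdist
  -- `Q x y` consists of the darts of the edge `xy`, if that edge lies inside `S`.
  let Q : V → V → Finset (V × V) := fun x y => if x ∈ S ∧ y ∈ S then {(x, y), (y, x)} else ∅
  have memQ : ∀ x y p q, (p, q) ∈ Q x y ↔ (x ∈ S ∧ y ∈ S) ∧ s(p, q) = s(x, y) := by
    intro x y p q
    simp only [Q]
    split_ifs with h <;> simp [h]
  have cardQ : ∀ x y, x ≠ y → (Q x y).card = if x ∈ S ∧ y ∈ S then 2 else 0 := by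
    intro x y hxy
    simp only [Q]
    split_ifs
    · exact Finset.card_pair (by simp [hxy])
    · rfl
  rw [← cardQ a b nab, ← cardQ c d ncd, ← cardQ a c nac, ← cardQ b d nbd]
  have hsub : Q a b ∪ Q c d ⊆ dartsIn G S := by
    rintro ⟨p, q⟩ h
    rw [Finset.mem_union, memQ, memQ] at h
    simp only [Sym2.eq_iff] at h
    rw [mem_dartsIn]
    rcases h with ⟨⟨h1, h2⟩, ⟨rfl, rfl⟩ | ⟨rfl, rfl⟩⟩ | ⟨⟨h1, h2⟩, ⟨rfl, rfl⟩ | ⟨rfl, rfl⟩⟩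
    · exact ⟨⟨h1, h2⟩, hab⟩
    · exact ⟨⟨h2, h1⟩, hab.symm⟩
    · exact ⟨⟨h1, h2⟩, hcd⟩
    · exact ⟨⟨h2, h1⟩, hcd.symm⟩
  have hdisj : Disjoint (Q a b) (Q c d) := by
    rw [Finset.disjoint_left]
    rintro ⟨p, q⟩ h h'
    have h1 := ((memQ _ _ _ _).1 h).2
    have h2 := ((memQ _ _ _ _).1 h').2
    rw [h1, Sym2.eq_iff] at h2
    tauto
  have hle : dartsIn (twoSwitch G a b c d) S ⊆
      (dartsIn G S \ (Q a b ∪ Q c d)) ∪ (Q a c ∪ Q b d) := by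
    rintro ⟨p, q⟩ h
    obtain ⟨⟨hp, hq⟩, h⟩ := mem_dartsIn.1 h
    have hmem : ∀ x y, s(p, q) = s(x, y) → x ∈ S ∧ y ∈ S := by
      intro x y hxy
      rcases Sym2.eq_iff.1 hxy with ⟨rfl, rfl⟩ | ⟨rfl, rfl⟩
      exacts [⟨hp, hq⟩, ⟨hq, hp⟩]
    simp only [Finset.mem_union, Finset.mem_sdiff, memQ, mem_dartsIn]
    rcases twoSwitch_adj_imp h with ⟨h1, h2, h3⟩ | h | h
    · exact .inl ⟨⟨⟨hp, hq⟩, h1⟩, by tauto⟩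
    · exact .inr (.inl ⟨hmem _ _ h, h⟩)
    · exact .inr (.inr ⟨hmem _ _ h, h⟩)
  have e1 := Finset.card_le_card hle
  have e2 := Finset.card_union_le (dartsIn G S \ (Q a b ∪ Q c d)) (Q a c ∪ Q b d)
  have e3 := Finset.card_union_le (Q a c) (Q b d)
  have e4 := Finset.card_sdiff_add_card_eq_card hsub
  rw [Finset.card_union_of_disjoint hdisj] at e4
  omega

/-- a nontrivial 2-switch on a pseudoforest G between an edge of Forest(G) and
an edge of Cycles(G), or between two edges of Cycles(G), yields a pseudoforest. -/
theorem stmt14 {V : Type*} [Fintype V] (G : SimpleGraph V) (hG : Pseudoforest G)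
    (a b c d : V) (hdist : [a, b, c, d].Nodup)
    (hab : G.Adj a b) (hcd : G.Adj c d) (hac : ¬ G.Adj a c) (hbd : ¬ G.Adj b d)
    (hcase : ((forestPart G).Adj a b ∧ (cyclesSub G).Adj c d) ∨
      ((cyclesSub G).Adj a b ∧ (cyclesSub G).Adj c d)) :
    Pseudoforest (twoSwitch G a b c d) := by
  classical
  have hG' := sparse_of_pseudoforest hG
  have hcyc : (cyclesSub G).Adj c d := by tauto
  obtain ⟨H, hH, hHcd⟩ := Subgraph.sSup_adj.1 hcyc
  refine pseudoforest_of_sparse fun S => ?_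
  have hle := card_dartsIn_twoSwitch_le hdist hab hcd S
  have hsp := hG' S
  -- Dart counts are even, so a set that is not tight has room for one more edge.
  have hev := card_dartsIn_eq_edges G S
  have htight : 2 * S.card ≤ (dartsIn G S).card → (c ∈ S ↔ d ∈ S) := fun ht =>
    ⟨fun h => verts_subset_of_tight hG' hH ht h hHcd.fst_mem hHcd.snd_mem,
      fun h => verts_subset_of_tight hG' hH ht h hHcd.snd_mem hHcd.fst_mem⟩
  by_cases ha : a ∈ S <;> by_cases hb : b ∈ S <;> by_cases hc : c ∈ S <;> by_cases hd : d ∈ S <;>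
    simp only [ha, hb, hc, hd, and_self, and_true, and_false, if_true, if_false, iff_self,
      not_true, imp_false, iff_true, iff_false] at hle htight <;>
    omega
end

section
/- Let G be a pseudoforest having two distinct connected components U and U', each of which is unicyclic, and let a, b, c, d be four distinct vertices with ab an edge of U not lying on the cycle of U, cd an edge of U' not lying on the cycle of U', and ac, ad, bc, bd ∉ E(G), so that both τ = (a b / c d) (producing G − ab − cd + ac + bd) and τ' = (a b / d c) (producing G − ab − cd + ad + bc) are nontrivial 2-switches on G. Then τ(G) is a pseudoforest if and only if τ'(G) is not a pseudoforest. -/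
/-!
Delete both edges first: `G₀ = G - ab - cd`. An edge off all cycles is a bridge, so in `G₀` the
vertices `a, b, c, d` lie in four different components. The cycle of `U` survives in `G₀` and lies
on exactly one of the two sides of the bridge `ab` (`edge_off_cycles_separates`, `hasCycle_or`,
`not_hasCycle_of_hasCycle`), and likewise for `U'` and `cd`. A 2-switch adds to `G₀` two edges, each
joining a side of `ab` to a side of `cd`. One of the two switches joins the two sides carrying a
cycle, so it is not a pseudoforest (`not_isPF_of_join`). The other one joins each side carrying a
cycle to an acyclic side: an edge between different components is a bridge, hence creates no cycle,
and it never puts two cycles in one component (`IsPF.sup_edge`). Both facts are combined in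
`switch_core`; the theorem is its application to the four possible positions of the two cycles.

A cycle subgraph is handled through the graph on the ambient vertex set with the same edges
(`IsCyc`), so that passing between subgraphs and supergraphs of `G` only involves `≤`.
-/


open SimpleGraph

variable {V : Type*}

/-! ### Cycles as graphs on the ambient vertex set -/

/-- `C` consists of one cycle together with isolated vertices; the vertices of the cycle are those
of `C.support`. -/
structure IsCyc (C : SimpleGraph V) : Prop where
  nonempty : C.support.Nonempty
  conn : ∀ u ∈ C.support, ∀ v ∈ C.support, C.Reachable u v
  deg : ∀ v ∈ C.support, (C.neighborSet v).ncard = 2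

/-- The pseudoforest condition phrased with `IsCyc`; see `pseudoforest_iff_isPF`. -/
def IsPF (G : SimpleGraph V) : Prop :=
  ∀ C₁ C₂ : SimpleGraph V, C₁ ≤ G → C₂ ≤ G → IsCyc C₁ → IsCyc C₂ →
    ∀ u ∈ C₁.support, ∀ v ∈ C₂.support, G.Reachable u v → C₁ = C₂

/-- The connected component of `x` in `G` contains a cycle. -/
def HasCycle (G : SimpleGraph V) (x : V) : Prop :=
  ∃ C ≤ G, IsCyc C ∧ ∃ u ∈ C.support, G.Reachable u x

lemma IsCycleSubgraph.support_spanningCoe {G : SimpleGraph V} {H : G.Subgraph}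
    (h : IsCycleSubgraph G H) : H.spanningCoe.support = H.verts := by
  ext v
  refine ⟨fun ⟨w, hw⟩ => H.edge_vert hw, fun hv => ?_⟩
  obtain ⟨w, hw⟩ : (H.neighborSet v).Nonempty := by
    apply Set.nonempty_of_ncard_ne_zero
    rw [h.2 v hv]
    decide
  exact ⟨w, hw⟩

lemma IsCycleSubgraph.isCyc {G : SimpleGraph V} {H : G.Subgraph}
    (h : IsCycleSubgraph G H) : IsCyc H.spanningCoe := by
  have hs := h.support_spanningCoe
  refine ⟨?_, ?_, ?_⟩
  · rw [hs]
    obtain ⟨⟨v, hv⟩⟩ := h.1.nonempty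
    exact ⟨v, hv⟩
  · rw [hs]
    intro u hu v hv
    let f : H.coe →g H.spanningCoe := ⟨Subtype.val, fun h => h⟩
    exact (h.1.preconnected ⟨u, hu⟩ ⟨v, hv⟩).map f
  · rw [hs]
    exact h.2

/-- The subgraph of `G` with the edges of `C` and no isolated vertices. -/
def cycSubgraph (G C : SimpleGraph V) (h : C ≤ G) : G.Subgraph where
  verts := C.support
  Adj := C.Adj
  adj_sub := fun hvw => h hvw
  edge_vert := fun hvw => ⟨_, hvw⟩
  symm := C.symm

lemma IsCyc.isCycleSubgraph {G C : SimpleGraph V} (h : C ≤ G) (hC : IsCyc C) :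
    IsCycleSubgraph G (cycSubgraph G C h) := by
  refine ⟨?_, hC.deg⟩
  have : Nonempty (cycSubgraph G C h).verts := hC.nonempty.to_subtype
  refine ⟨fun u v => ?_⟩
  have key : ∀ x y : V, C.Walk x y → ∀ (hx : x ∈ C.support) (hy : y ∈ C.support),
      (cycSubgraph G C h).coe.Reachable ⟨x, hx⟩ ⟨y, hy⟩ := by
    intro x y p
    induction p with
    | nil => exact fun _ _ => Reachable.refl _
    | @cons x z y hxz _ ih =>
      intro hx hy
      have hz : z ∈ C.support := ⟨x, hxz.symm⟩
      have hadj : (cycSubgraph G C h).coe.Adj ⟨x, hx⟩ ⟨z, hz⟩ := hxz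
      exact hadj.reachable.trans (ih hz hy)
  obtain ⟨p⟩ := hC.conn u.1 u.2 v.1 v.2
  exact key _ _ p u.2 v.2

lemma pseudoforest_iff_isPF (G : SimpleGraph V) : Pseudoforest G ↔ IsPF G := by
  constructor
  · intro hG C₁ C₂ h₁ h₂ c₁ c₂ u hu v hv huv
    have := hG _ _ (c₁.isCycleSubgraph h₁) (c₂.isCycleSubgraph h₂) ⟨u, hu, v, hv, huv⟩
    exact congrArg Subgraph.spanningCoe this
  · rintro hG H₁ H₂ h₁ h₂ ⟨u, hu, v, hv, huv⟩
    have := hG _ _ H₁.spanningCoe_le H₂.spanningCoe_le h₁.isCyc h₂.isCyc u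
      (by rwa [h₁.support_spanningCoe]) v (by rwa [h₂.support_spanningCoe]) huv
    refine Subgraph.ext ?_ ?_
    · rw [← h₁.support_spanningCoe, ← h₂.support_spanningCoe, this]
    · exact congrArg SimpleGraph.Adj this

lemma IsCyc.map {W : Type*} {C : SimpleGraph W} (hC : IsCyc C) (f : W ↪ V) :
    IsCyc (C.map f) := by
  have hs : ∀ v ∈ (C.map f).support, ∃ w ∈ C.support, f w = v := by
    rintro v ⟨_, _, x, y, hxy, rfl, rfl⟩
    exact ⟨x, ⟨y, hxy⟩, rfl⟩
  refine ⟨?_, ?_, ?_⟩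
  · obtain ⟨x, y, hxy⟩ := hC.nonempty
    exact ⟨f x, f y, by simpa using hxy⟩
  · intro u hu v hv
    obtain ⟨x, hx, rfl⟩ := hs u hu
    obtain ⟨y, hy, rfl⟩ := hs v hv
    exact (hC.conn x hx y hy).map (Embedding.map f C).toHom
  · intro v hv
    obtain ⟨x, hx, rfl⟩ := hs v hv
    have : (C.map f).neighborSet (f x) = f '' C.neighborSet x := by
      ext z
      constructor
      · rintro ⟨_, p, q, hpq, hp, rfl⟩
        obtain rfl := f.injective hp
        exact ⟨q, hpq, rfl⟩
      · rintro ⟨q, hq, rfl⟩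
        exact (by simpa using hq : (C.map f).Adj (f x) (f q))
    rw [this, Set.ncard_image_of_injective _ f.injective]
    exact hC.deg x hx

/-! ### Bridges and added edges -/

/-- Every edge of a cycle can be bypassed inside the cycle. -/
lemma IsCyc.reachable_deleteEdges [Finite V] {C : SimpleGraph V} (hC : IsCyc C) {x y : V}
    (h : C.Adj x y) : (C.deleteEdges {s(x, y)}).Reachable x y :=
  IsCycles.reachable_deleteEdges h fun v ⟨w, hw⟩ => hC.deg v ⟨w, hw⟩

lemma edge_off_cycles_separates {G : SimpleGraph V} {a b : V} (hab : G.Adj a b)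
    (h : s(a, b) ∉ (cyclesSub G).edgeSet) : ¬ (G.deleteEdges {s(a, b)}).Reachable a b := by
  intro hr
  obtain ⟨u, p, hp, he⟩ := adj_and_reachable_delete_edges_iff_exists_cycle.mp ⟨hab, hr⟩
  have hcyc : IsCycleSubgraph G p.toSubgraph :=
    ⟨p.toSubgraph_connected.coe, fun v hv =>
      hp.ncard_neighborSet_toSubgraph_eq_two (p.mem_verts_toSubgraph.mp hv)⟩
  exact h (Subgraph.edgeSet_mono (le_sSup hcyc : p.toSubgraph ≤ cyclesSub G)
    (p.mem_edges_toSubgraph.mpr he))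

lemma IsCyc.not_adj_of_notMem {G C : SimpleGraph V} (hC : IsCyc C) (hCG : C ≤ G) {a b : V}
    (h : s(a, b) ∉ (cyclesSub G).edgeSet) : ¬ C.Adj a b := by
  intro hadj
  exact h (Subgraph.edgeSet_mono
    (le_sSup (hC.isCycleSubgraph hCG) : cycSubgraph G C hCG ≤ cyclesSub G) hadj)

lemma reachable_sup_edge {G : SimpleGraph V} {x y u v : V} (h : (G ⊔ edge x y).Reachable u v) :
    G.Reachable u v ∨ (G.Reachable u x ∧ G.Reachable y v) ∨
      (G.Reachable u y ∧ G.Reachable x v) := by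
  obtain ⟨p⟩ := h
  induction p with
  | nil => exact Or.inl (Reachable.refl _)
  | @cons u w v huw _ ih =>
    rw [sup_adj, edge_adj] at huw
    rcases huw with huw | ⟨⟨rfl, rfl⟩ | ⟨rfl, rfl⟩, _⟩
    · have := huw.reachable
      rcases ih with h | ⟨h, h'⟩ | ⟨h, h'⟩
      · exact Or.inl (this.trans h)
      · exact Or.inr (Or.inl ⟨this.trans h, h'⟩)
      · exact Or.inr (Or.inr ⟨this.trans h, h'⟩)
    · rcases ih with h | ⟨h, h'⟩ | ⟨h, h'⟩
      · exact Or.inr (Or.inl ⟨Reachable.refl _, h⟩)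
      · exact Or.inr (Or.inl ⟨Reachable.refl _, h'⟩)
      · exact Or.inl h'
    · rcases ih with h | ⟨h, h'⟩ | ⟨h, h'⟩
      · exact Or.inr (Or.inr ⟨Reachable.refl _, h⟩)
      · exact Or.inl h'
      · exact Or.inr (Or.inr ⟨Reachable.refl _, h'⟩)

/-- Joining two different components by an edge creates no new cycle. -/
lemma IsCyc.le_of_le_sup_edge [Finite V] {G C : SimpleGraph V} {x y : V} (hC : IsCyc C)
    (h : C ≤ G ⊔ edge x y) (hxy : ¬ G.Reachable x y) : C ≤ G := by
  have hle : C.deleteEdges {s(x, y)} ≤ G := by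
    intro u v huv
    rw [deleteEdges_adj] at huv
    rcases h huv.1 with h' | h'
    · exact h'
    · rw [edge_adj] at h'
      exact absurd (by rcases h'.1 with ⟨rfl, rfl⟩ | ⟨rfl, rfl⟩ <;> simp) huv.2
  have hn : ¬ C.Adj x y := fun hadj => hxy ((hC.reachable_deleteEdges hadj).mono hle)
  intro u v huv
  refine hle ?_
  rw [deleteEdges_adj]
  refine ⟨huv, fun hmem => ?_⟩
  rcases Sym2.eq_iff.mp (Set.mem_singleton_iff.mp hmem) with ⟨rfl, rfl⟩ | ⟨rfl, rfl⟩
  · exact hn huv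
  · exact hn huv.symm

lemma IsPF.mono {G G' : SimpleGraph V} (h : IsPF G) (hle : G' ≤ G) : IsPF G' :=
  fun C₁ C₂ h₁ h₂ c₁ c₂ u hu v hv huv =>
    h C₁ C₂ (h₁.trans hle) (h₂.trans hle) c₁ c₂ u hu v hv (huv.mono hle)

lemma IsPF.sup_edge [Finite V] {G : SimpleGraph V} {x y : V} (hG : IsPF G)
    (hxy : ¬ G.Reachable x y) (hx : ¬ HasCycle G x) : IsPF (G ⊔ edge x y) := by
  intro C₁ C₂ h₁ h₂ c₁ c₂ u hu v hv huv
  have h₁' := c₁.le_of_le_sup_edge h₁ hxy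
  have h₂' := c₂.le_of_le_sup_edge h₂ hxy
  rcases reachable_sup_edge huv with h | ⟨h, _⟩ | ⟨_, h⟩
  · exact hG C₁ C₂ h₁' h₂' c₁ c₂ u hu v hv h
  · exact absurd ⟨C₁, h₁', c₁, u, hu, h⟩ hx
  · exact absurd ⟨C₂, h₂', c₂, v, hv, h.symm⟩ hx

lemma reachable_of_sup_edge {G : SimpleGraph V} {x y u b : V} (hx : ¬ G.Reachable x b)
    (hy : ¬ G.Reachable y b) (h : (G ⊔ edge x y).Reachable u b) : G.Reachable u b := by
  rcases reachable_sup_edge h with h | ⟨_, h⟩ | ⟨_, h⟩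
  · exact h
  · exact absurd h hy
  · exact absurd h hx

lemma not_isPF_of_join {G G' : SimpleGraph V} {x y : V} (hle : G ≤ G') (hxy : ¬ G.Reachable x y)
    (hxy' : G'.Reachable x y) (hx : HasCycle G x) (hy : HasCycle G y) : ¬ IsPF G' := by
  rintro hG'
  obtain ⟨C₁, h₁, c₁, u, hu, hux⟩ := hx
  obtain ⟨C₂, h₂, c₂, v, hv, hvy⟩ := hy
  have heq := hG' C₁ C₂ (h₁.trans hle) (h₂.trans hle) c₁ c₂ u hu v hv
    (((hux.mono hle).trans hxy').trans (hvy.mono hle).symm)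
  subst heq
  exact hxy ((hux.symm.trans ((c₁.conn u hu v hv).mono h₁)).trans hvy)

/-- Two different components of `G₀ ≤ G` lying in one component of the pseudoforest `G` cannot both
contain a cycle. -/
lemma not_hasCycle_of_hasCycle {G G₀ : SimpleGraph V} (hG : IsPF G) (hle : G₀ ≤ G) {a b : V}
    (hab : G.Reachable a b) (hab₀ : ¬ G₀.Reachable a b) (ha : HasCycle G₀ a) :
    ¬ HasCycle G₀ b :=
  fun hb => not_isPF_of_join hle hab₀ hab ha hb hG

/-! ### The two switches -/

/-- In a pseudoforest `G` with `a, b, c, d` in different components, of which those of `a` and `c`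
contain a cycle and those of `b` and `d` do not, adding `ac, bd` destroys the pseudoforest property
while adding `ad, bc` preserves it. -/
lemma switch_core [Finite V] {G : SimpleGraph V} {a b c d : V} (hG : IsPF G)
    (hab : ¬ G.Reachable a b) (hcd : ¬ G.Reachable c d)
    (hac : ¬ G.Reachable a c) (had : ¬ G.Reachable a d) (hbc : ¬ G.Reachable b c)
    (hbd : ¬ G.Reachable b d)
    (ha : HasCycle G a) (hb : ¬ HasCycle G b) (hc : HasCycle G c) (hd : ¬ HasCycle G d) :
    ¬ IsPF (G ⊔ (edge a c ⊔ edge b d)) ∧ IsPF (G ⊔ (edge a d ⊔ edge b c)) := by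
  constructor
  · refine not_isPF_of_join le_sup_left hac (Adj.reachable ?_) ha hc
    refine Or.inr (Or.inl ((edge_adj _ _ _ _).mpr ⟨Or.inl ⟨rfl, rfl⟩, ?_⟩))
    rintro rfl
    exact hac (Reachable.refl _)
  · rw [← sup_assoc]
    have h₁ : IsPF (G ⊔ edge a d) := by
      rw [edge_comm]
      exact hG.sup_edge (fun h => had h.symm) hd
    have hdb : ¬ G.Reachable d b := fun h => hbd h.symm
    refine h₁.sup_edge (fun h => ?_) ?_
    · exact hbc (reachable_of_sup_edge hab hdb h.symm).symm
    · rintro ⟨C, hCG, hC, u, hu, hub⟩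
      exact hb ⟨C, hC.le_of_le_sup_edge hCG had, hC, u, hu, reachable_of_sup_edge hab hdb hub⟩

lemma twoSwitch_eq (G : SimpleGraph V) (a b c d : V) :
    twoSwitch G a b c d = G.deleteEdges {s(a, b), s(c, d)} ⊔ (edge a c ⊔ edge b d) := by
  rw [twoSwitch, edge, edge, ← fromEdgeSet_union]
  rfl

lemma exists_isCyc_of_unicyclic {G : SimpleGraph V} {S : Set V} (h : Unicyclic (G.induce S)) :
    ∃ C ≤ G, IsCyc C ∧ ∃ u ∈ C.support, u ∈ S := by
  obtain ⟨_, H, hH, -⟩ := h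
  have hC := hH.isCyc.map (Function.Embedding.subtype (· ∈ S))
  refine ⟨_, ?_, hC, ?_⟩
  · rintro _ _ ⟨_, x, y, hxy, rfl, rfl⟩
    exact H.adj_sub hxy
  · obtain ⟨u, hu⟩ := hC.nonempty
    refine ⟨u, hu, ?_⟩
    obtain ⟨_, _, x, y, hxy, rfl, rfl⟩ := hu
    exact x.2

/-- The cycle in the component of `a` survives the deletion of `ab` and `cd`, and ends up on the
side of `a` or on the side of `b`. -/
lemma hasCycle_or {G : SimpleGraph V} {K : G.ConnectedComponent} {a b c d : V}
    (hK : Unicyclic (G.induce K.supp)) (haK : a ∈ K.supp) (hcK : c ∉ K.supp) (hdK : d ∉ K.supp)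
    (hab : G.Adj a b) (habF : s(a, b) ∉ (cyclesSub G).edgeSet)
    (hcdF : s(c, d) ∉ (cyclesSub G).edgeSet) :
    HasCycle (G.deleteEdges {s(a, b), s(c, d)}) a ∨
      HasCycle (G.deleteEdges {s(a, b), s(c, d)}) b := by
  obtain ⟨C, hCG, hC, u, hu, huK⟩ := exists_isCyc_of_unicyclic hK
  set G₀ := G.deleteEdges {s(a, b), s(c, d)} with hG₀
  have hle : G₀ ≤ G := deleteEdges_le _
  have hCG₀ : C ≤ G₀ := by
    intro x y hxy
    rw [hG₀, deleteEdges_adj]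
    refine ⟨hCG hxy, ?_⟩
    rintro (h | h)
    · exact hC.not_adj_of_notMem hCG (h ▸ habF) hxy
    · exact hC.not_adj_of_notMem hCG (Set.mem_singleton_iff.mp h ▸ hcdF) hxy
  have hsup : G ≤ (G₀ ⊔ edge a b) ⊔ edge c d := by
    intro x y hxy
    by_cases h : s(x, y) ∈ ({s(a, b), s(c, d)} : Set (Sym2 V))
    · rcases h with h | h
      · refine Or.inl (Or.inr ?_)
        rw [edge_adj]
        exact ⟨Sym2.eq_iff.mp h, hxy.ne⟩
      · refine Or.inr ?_
        rw [edge_adj]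
        exact ⟨Sym2.eq_iff.mp h, hxy.ne⟩
    · exact Or.inl (Or.inl (by rw [hG₀, deleteEdges_adj]; exact ⟨hxy, h⟩))
  have hua : G.Reachable u a := ConnectedComponent.exact (huK.trans haK.symm)
  have hnot : ∀ z, z ∉ K.supp → G.Reachable u z → False := fun z hz h =>
    hz ((ConnectedComponent.sound h.symm).trans huK)
  have hle' : G₀ ⊔ edge a b ≤ G := sup_le hle ((edge_le_iff _).mpr (Or.inr hab))
  rcases reachable_sup_edge (hua.mono hsup) with h | ⟨h, -⟩ | ⟨h, -⟩
  · rcases reachable_sup_edge h with h | ⟨h, -⟩ | ⟨h, -⟩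
    · exact Or.inl ⟨C, hCG₀, hC, u, hu, h⟩
    · exact Or.inl ⟨C, hCG₀, hC, u, hu, h⟩
    · exact Or.inr ⟨C, hCG₀, hC, u, hu, h⟩
  · exact (hnot c hcK (h.mono hle')).elim
  · exact (hnot d hdK (h.mono hle')).elim

/-- let G be a pseudoforest with two distinct unicyclic connected components U
and U', let ab be an edge of U off its cycle and cd an edge of U' off its cycle, with
ac, ad, bc, bd ∉ E(G). Then τ = (a b / c d) yields a pseudoforest iff τ' = (a b / d c) does
not. -/
theorem stmt15 {V : Type*} [Fintype V] (G : SimpleGraph V) (hG : Pseudoforest G)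
    (cU cU' : G.ConnectedComponent) (hcc : cU ≠ cU')
    (hUuni : Unicyclic (G.induce cU.supp))
    (hU'uni : Unicyclic (G.induce cU'.supp))
    (a b c d : V) (hdist : [a, b, c, d].Nodup)
    (haU : a ∈ cU.supp) (hbU : b ∈ cU.supp) (hcU' : c ∈ cU'.supp) (hdU' : d ∈ cU'.supp)
    (hab : G.Adj a b) (habF : s(a, b) ∉ (cyclesSub G).edgeSet)
    (hcd : G.Adj c d) (hcdF : s(c, d) ∉ (cyclesSub G).edgeSet)
    (hac : ¬ G.Adj a c) (had : ¬ G.Adj a d) (hbc : ¬ G.Adj b c) (hbd : ¬ G.Adj b d) :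
    Pseudoforest (twoSwitch G a b c d) ↔ ¬ Pseudoforest (twoSwitch G a b d c) := by
  have hswap : twoSwitch G a b d c =
      G.deleteEdges {s(a, b), s(c, d)} ⊔ (edge a d ⊔ edge b c) := by
    rw [twoSwitch_eq, Sym2.eq_swap (a := d) (b := c)]
  rw [pseudoforest_iff_isPF, pseudoforest_iff_isPF, twoSwitch_eq, hswap]
  rw [pseudoforest_iff_isPF] at hG
  have hout : ∀ z ∈ cU'.supp, z ∉ cU.supp := fun z hz hz' => hcc (hz'.symm.trans hz)
  have hout' : ∀ z ∈ cU.supp, z ∉ cU'.supp := fun z hz hz' => hout z hz' hz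
  have hcycU := hasCycle_or hUuni haU (hout c hcU') (hout d hdU') hab habF hcdF
  have hcycU' := hasCycle_or hU'uni hcU' (hout' a haU) (hout' b hbU) hcd hcdF habF
  rw [Set.pair_comm] at hcycU'
  set G₀ := G.deleteEdges {s(a, b), s(c, d)} with hG₀
  have hle : G₀ ≤ G := deleteEdges_le _
  have hsep : ∀ x ∈ cU.supp, ∀ y ∈ cU'.supp, ¬ G₀.Reachable x y := fun x hx y hy h =>
    hcc (hx.symm.trans ((ConnectedComponent.sound (h.mono hle)).trans hy))
  have hnab : ¬ G₀.Reachable a b := fun h =>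
    edge_off_cycles_separates hab habF (h.mono (deleteEdges_anti (by simp)))
  have hncd : ¬ G₀.Reachable c d := fun h =>
    edge_off_cycles_separates hcd hcdF (h.mono (deleteEdges_anti (by simp)))
  have hnba : ¬ G₀.Reachable b a := fun h => hnab h.symm
  have hndc : ¬ G₀.Reachable d c := fun h => hncd h.symm
  have hnac := hsep a haU c hcU'
  have hnad := hsep a haU d hdU'
  have hnbc := hsep b hbU c hcU'
  have hnbd := hsep b hbU d hdU'
  have hPF : IsPF G₀ := hG.mono hle
  rcases hcycU with h₁ | h₁
  · have h₁' := not_hasCycle_of_hasCycle hG hle hab.reachable hnab h₁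
    rcases hcycU' with h₂ | h₂
    · have h₂' := not_hasCycle_of_hasCycle hG hle hcd.reachable hncd h₂
      have := switch_core hPF hnab hncd hnac hnad hnbc hnbd h₁ h₁' h₂ h₂'
      exact iff_of_false this.1 (not_not_intro this.2)
    · have h₂' := not_hasCycle_of_hasCycle hG hle hcd.symm.reachable hndc h₂
      have := switch_core hPF hnab hndc hnad hnac hnbd hnbc h₁ h₁' h₂ h₂'
      exact iff_of_true this.2 this.1
  · have h₁' := not_hasCycle_of_hasCycle hG hle hab.symm.reachable hnba h₁
    rw [sup_comm (edge a c), sup_comm (edge a d)]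
    rcases hcycU' with h₂ | h₂
    · have h₂' := not_hasCycle_of_hasCycle hG hle hcd.reachable hncd h₂
      have := switch_core hPF hnba hncd hnbc hnbd hnac hnad h₁ h₁' h₂ h₂'
      exact iff_of_true this.2 this.1
    · have h₂' := not_hasCycle_of_hasCycle hG hle hcd.symm.reachable hndc h₂
      have := switch_core hPF hnba hndc hnbd hnbc hnad hnac h₁ h₁' h₂ h₂'
      exact iff_of_false this.1 (not_not_intro this.2)
end

section
/- If G is a pseudoforest, then ‖G‖ + κ(G) = |G| + cycles(G), where |G| is the number of vertices of G, ‖G‖ is the number of edges of G, κ(G) is the number of connected components of G, and cycles(G) is the number of cycle subgraphs of G. -/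
/-!
The proof is by induction on the number of edges, deleting one edge `e = uv` at a time.
Deletion keeps the graph a pseudoforest, because a subgraph of `G - e` is a subgraph of `G`, and
`cycles(G) = cycles(G - e) + #{cycle subgraphs through e}` (`numCycles_eq_deleteEdge_add`).

* If `e` is a bridge, deleting it creates exactly one new component
  (`numComponents_deleteEdge_of_isBridge`), and no cycle subgraph passes through `e`
  (`IsCycleSubgraph.not_isBridge`): both sides of the identity are unchanged.
* If `e` is not a bridge, the components stay the same
  (`numComponents_deleteEdge_of_not_isBridge`), and `e` lies on a cycle subgraph, which is unique
  since any two cycle subgraphs through `e` lie in the same component: both sides drop by one.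

The edgeless graph has as many components as vertices and no cycle subgraphs.
-/

open SimpleGraph

variable {V : Type*}

/-! ### Cycle subgraphs and edge deletion -/

/-- A subgraph of `G'`, seen as a subgraph of a larger graph `G` with the same vertices and
edges. -/
def liftSubgraph {G' G : SimpleGraph V} (h : G' ≤ G) (H : G'.Subgraph) : G.Subgraph where
  verts := H.verts
  Adj := H.Adj
  adj_sub hab := h (H.adj_sub hab)
  edge_vert := H.edge_vert
  symm := H.symm

lemma liftSubgraph_injective {G' G : SimpleGraph V} (h : G' ≤ G) :
    Function.Injective (liftSubgraph h) := by
  intro H₁ H₂ heq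
  have hverts : (liftSubgraph h H₁).verts = (liftSubgraph h H₂).verts := by rw [heq]
  have hadj : (liftSubgraph h H₁).Adj = (liftSubgraph h H₂).Adj := by rw [heq]
  exact Subgraph.ext hverts hadj

lemma Pseudoforest.anti {G' G : SimpleGraph V} (h : G' ≤ G) (hG : Pseudoforest G) :
    Pseudoforest G' := by
  rintro H₁ H₂ h₁ h₂ ⟨u, hu, v, hv, huv⟩
  exact liftSubgraph_injective h (hG _ _ h₁ h₂ ⟨u, hu, v, hv, huv.mono h⟩)

lemma numCycles_eq_deleteEdge_add [Finite V] (G : SimpleGraph V) (u v : V) :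
    numCycles G = numCycles (G.deleteEdges {s(u, v)}) +
      {H : G.Subgraph | IsCycleSubgraph G H ∧ H.Adj u v}.ncard := by
  have hle : G.deleteEdges {s(u, v)} ≤ G := deleteEdges_le _
  unfold numCycles
  rw [← Set.ncard_image_of_injective _ (liftSubgraph_injective hle),
    ← Set.ncard_union_eq _ (Set.toFinite _) (Set.toFinite _)]
  · congr 1
    ext H
    simp only [Set.mem_ofPred_eq, Set.mem_union, Set.mem_image]
    constructor
    · intro hH
      by_cases hadj : H.Adj u v
      · exact Or.inr ⟨hH, hadj⟩
      · left
        -- a cycle subgraph of `G` that avoids `uv` is a subgraph of `G - uv`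
        refine ⟨⟨H.verts, H.Adj, fun {a b} hab => ?_, H.edge_vert, H.symm⟩, hH, rfl⟩
        rw [deleteEdges_adj]
        refine ⟨H.adj_sub hab, fun hmem => hadj ?_⟩
        rcases Sym2.eq_iff.mp (Set.mem_singleton_iff.mp hmem) with ⟨rfl, rfl⟩ | ⟨rfl, rfl⟩
        · exact hab
        · exact hab.symm
    · rintro (⟨H', hH', rfl⟩ | ⟨hH, -⟩)
      · exact hH'
      · exact hH
  · rw [Set.disjoint_left]
    rintro _ ⟨H', -, rfl⟩ ⟨-, hadj⟩
    have := H'.adj_sub hadj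
    simp at this

/-- In a finite 2-regular graph the ends of an edge stay connected once the edge is deleted. -/
lemma IsCycleSubgraph.not_isBridge [Finite V] {G : SimpleGraph V} {H : G.Subgraph}
    (hH : IsCycleSubgraph G H) {u v : V} (huv : H.Adj u v) : ¬ G.IsBridge s(u, v) := by
  rw [isBridge_iff, not_not]
  have hcyc : H.spanningCoe.IsCycles := by
    rintro w ⟨x, hx⟩
    exact hH.2 w (H.edge_vert hx)
  exact (hcyc.reachable_deleteEdges (v := u) (w := v) huv).mono
    (deleteEdges_mono H.spanningCoe_le)

lemma exists_isCycleSubgraph_of_not_isBridge {G : SimpleGraph V} {u v : V}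
    (huv : G.Adj u v) (hb : ¬ G.IsBridge s(u, v)) :
    ∃ H : G.Subgraph, IsCycleSubgraph G H ∧ H.Adj u v := by
  rw [isBridge_iff_forall_cycle_notMem (G.mem_edgeSet.mpr huv)] at hb
  push Not at hb
  obtain ⟨w, p, hp, he⟩ := hb
  refine ⟨p.toSubgraph, ⟨p.toSubgraph_connected.coe, fun x hx => ?_⟩, ?_⟩
  · exact hp.ncard_neighborSet_toSubgraph_eq_two (p.mem_verts_toSubgraph.mp hx)
  · rwa [← Subgraph.mem_edgeSet, Walk.mem_edges_toSubgraph]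

/-! ### Components and edge deletion -/

/-- A walk of `G` either avoids the edge `uv`, or its first and last parts join its ends to
`u` or `v` without using `uv`. -/
lemma reachable_deleteEdge_or {G : SimpleGraph V} (u v : V) {x y : V} (h : G.Reachable x y) :
    (G.deleteEdges {s(u, v)}).Reachable x y ∨
      (((G.deleteEdges {s(u, v)}).Reachable x u ∨ (G.deleteEdges {s(u, v)}).Reachable x v) ∧
        ((G.deleteEdges {s(u, v)}).Reachable y u ∨
          (G.deleteEdges {s(u, v)}).Reachable y v)) := by
  obtain ⟨p⟩ := h
  induction p with
  | nil => exact Or.inl (Reachable.refl _)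
  | @cons a b c hab p ih =>
    by_cases he : s(a, b) = s(u, v)
    · right
      rcases Sym2.eq_iff.mp he with ⟨rfl, rfl⟩ | ⟨rfl, rfl⟩
      · refine ⟨Or.inl (Reachable.refl _), ?_⟩
        rcases ih with ih | ih
        · exact Or.inr ih.symm
        · exact ih.2
      · refine ⟨Or.inr (Reachable.refl _), ?_⟩
        rcases ih with ih | ih
        · exact Or.inl ih.symm
        · exact ih.2
    · have hr : (G.deleteEdges {s(u, v)}).Reachable a b :=
        Adj.reachable (by rw [deleteEdges_adj]; exact ⟨hab, he⟩)
      rcases ih with ih | ⟨ih₁, ih₂⟩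
      · exact Or.inl (hr.trans ih)
      · exact Or.inr ⟨ih₁.imp hr.trans hr.trans, ih₂⟩

lemma numComponents_deleteEdge_of_not_isBridge {G : SimpleGraph V} {u v : V}
    (hb : ¬ G.IsBridge s(u, v)) :
    numComponents (G.deleteEdges {s(u, v)}) = numComponents G := by
  rw [isBridge_iff, not_not] at hb
  have hle : G.deleteEdges {s(u, v)} ≤ G := deleteEdges_le _
  refine Nat.card_eq_of_bijective _ ⟨?_, ConnectedComponent.surjective_map_ofLE hle⟩
  intro c d
  induction c using ConnectedComponent.ind with | h x => ?_
  induction d using ConnectedComponent.ind with | h y => ?_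
  intro hxy
  have hxy : G.Reachable x y := ConnectedComponent.exact hxy
  refine ConnectedComponent.sound ?_
  rcases reachable_deleteEdge_or u v hxy with h | ⟨h₁ | h₁, h₂ | h₂⟩
  · exact h
  · exact h₁.trans h₂.symm
  · exact h₁.trans (hb.trans h₂.symm)
  · exact h₁.trans (hb.symm.trans h₂.symm)
  · exact h₁.trans h₂.symm

/-- The components of `G - uv` other than that of `v` correspond to the components of `G`. -/
lemma numComponents_deleteEdge_of_isBridge [Finite V] {G : SimpleGraph V} {u v : V}
    (huv : G.Adj u v) (hb : G.IsBridge s(u, v)) :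
    numComponents (G.deleteEdges {s(u, v)}) = numComponents G + 1 := by
  classical
  rw [isBridge_iff] at hb
  have hle : G.deleteEdges {s(u, v)} ≤ G := deleteEdges_le _
  set G' := G.deleteEdges {s(u, v)} with hG'
  have hbij : Function.Bijective
      (fun c : {c : G'.ConnectedComponent // c ≠ G'.connectedComponentMk v} =>
        c.1.map (Hom.ofLE hle)) := by
    constructor
    · rintro ⟨c, hc⟩ ⟨d, hd⟩
      induction c using ConnectedComponent.ind with | h x => ?_
      induction d using ConnectedComponent.ind with | h y => ?_
      intro hxy
      have hxy : G.Reachable x y := ConnectedComponent.exact hxy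
      have hx : ¬ G'.Reachable x v := fun h => hc (ConnectedComponent.sound h)
      have hy : ¬ G'.Reachable y v := fun h => hd (ConnectedComponent.sound h)
      refine Subtype.ext (ConnectedComponent.sound ?_)
      rcases reachable_deleteEdge_or u v hxy with h | ⟨h₁ | h₁, h₂ | h₂⟩
      · exact h
      · exact h₁.trans h₂.symm
      · exact absurd h₂ hy
      · exact absurd h₁ hx
      · exact absurd h₁ hx
    · intro c
      induction c using ConnectedComponent.ind with | h x => ?_
      by_cases hx : G'.Reachable x v
      · -- the component of `v` in `G` is also the one of `u`
        refine ⟨⟨G'.connectedComponentMk u, fun h => hb (ConnectedComponent.exact h)⟩, ?_⟩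
        exact ConnectedComponent.sound (huv.reachable.trans (hx.mono hle).symm)
      · exact ⟨⟨G'.connectedComponentMk x, fun h => hx (ConnectedComponent.exact h)⟩, rfl⟩
  have hcard := Nat.card_eq_of_bijective _ hbij
  have hsplit := Nat.card_congr
    (Equiv.optionSubtypeNe (G'.connectedComponentMk v))
  rw [Finite.card_option] at hsplit
  unfold numComponents
  rw [← hsplit, hcard]

lemma numComponents_bot [Fintype V] : numComponents (⊥ : SimpleGraph V) = Fintype.card V := by
  rw [← Nat.card_eq_fintype_card]
  refine (Nat.card_eq_of_bijective (⊥ : SimpleGraph V).connectedComponentMk ⟨?_, ?_⟩).symm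
  · intro x y h
    exact reachable_bot.mp (ConnectedComponent.exact h)
  · exact fun c => c.exists_rep

lemma numCycles_bot : numCycles (⊥ : SimpleGraph V) = 0 := by
  have hempty : {H : (⊥ : SimpleGraph V).Subgraph | IsCycleSubgraph ⊥ H} = ∅ := by
    refine Set.eq_empty_iff_forall_notMem.mpr fun H hH => ?_
    obtain ⟨⟨v, hv⟩⟩ := hH.1.nonempty
    have h2 := hH.2 v hv
    have : H.neighborSet v = ∅ :=
      Set.eq_empty_iff_forall_notMem.mpr fun w hw => (H.adj_sub hw : False)
    simp [this] at h2
  rw [numCycles, hempty, Set.ncard_empty]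

/-- for a pseudoforest G, ‖G‖ + κ(G) = |G| + cycles(G). -/
theorem stmt16 {V : Type*} [Fintype V] (G : SimpleGraph V) (hG : Pseudoforest G) :
    G.edgeSet.ncard + numComponents G = Fintype.card V + numCycles G := by
  induction hn : G.edgeSet.ncard generalizing G with
  | zero =>
    have hbot : G = ⊥ := by
      rw [Set.ncard_eq_zero] at hn
      exact edgeSet_eq_empty.mp hn
    subst hbot
    rw [numComponents_bot, numCycles_bot]
    omega
  | succ n ih =>
    obtain ⟨e, he⟩ : G.edgeSet.Nonempty := by
      rw [← Set.ncard_pos]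
      omega
    induction e using Sym2.ind with | _ u v => ?_
    have huv : G.Adj u v := he
    have hedges : (G.deleteEdges {s(u, v)}).edgeSet.ncard = n := by
      rw [edgeSet_deleteEdges, Set.ncard_sdiff_singleton_of_mem he, hn]
      rfl
    have hrec := ih _ (hG.anti (deleteEdges_le _)) hedges
    have hcyc := numCycles_eq_deleteEdge_add G u v
    by_cases hb : G.IsBridge s(u, v)
    · have hcomp := numComponents_deleteEdge_of_isBridge huv hb
      have hnone : {H : G.Subgraph | IsCycleSubgraph G H ∧ H.Adj u v} = ∅ :=
        Set.eq_empty_iff_forall_notMem.mpr fun H hH => hH.1.not_isBridge hH.2 hb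
      rw [hnone, Set.ncard_empty] at hcyc
      omega
    · have hcomp := numComponents_deleteEdge_of_not_isBridge hb
      have hone : {H : G.Subgraph | IsCycleSubgraph G H ∧ H.Adj u v}.ncard = 1 := by
        obtain ⟨H, hH, hHuv⟩ := exists_isCycleSubgraph_of_not_isBridge huv hb
        refine Set.ncard_eq_one.mpr ⟨H, Set.eq_singleton_iff_unique_mem.mpr ⟨⟨hH, hHuv⟩, ?_⟩⟩
        rintro K ⟨hK, hKuv⟩
        exact hG K H hK hH
          ⟨u, K.edge_vert hKuv, u, H.edge_vert hHuv, Reachable.refl _⟩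
      omega
end
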